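/- arXiv:2309.05233 — 3 statements merged into one kernel-verified Lean document; each statement's English description precedes it below -/
import Mathlib

section
/- For every δ ∈ (0, 1/2) there exists a constant C = C(δ) such that, under the hypotheses of the context: for k = 1/2 one has | φ̂(i/4) − 2 e^{πi/4} (√2 − 1) (x/a)^{1/2} | ≤ C·( x^{−δ} (x/a)^{1/2} + 1 ), and for k = 3/2 one has | φ̂(i/4) − e^{3πi/4} (1 − 1/√2) (a/x)^{1/2} | ≤ C·( x^{−δ} (a/x)^{1/2} + 1 ). -/
/-!
Near `0` one has `cos u = 1 + O(u²)` and `sin u = u + O(u³)`, so both integrals are of the form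
`∫ f(u) φ(u) u ^ σ` with `f(u) = u ^ m + O(u ^ (m + 2))`. Write `r = a / x`. On the plateau
`[r / 2, r]` of `φ` the leading term integrates to `∫ u ^ (m + σ)`, which is the main term, and the
Taylor error costs `O(r ^ (m + σ + 3))`. The two ramps of `φ` have total length `O(r T / x)`, and
the integrand is `O(r ^ (m + σ))` on them, whence the error `O(r ^ (m + σ + 1) T / x)`.
-/

open Real MeasureTheory

/-- `φ̂(i/4)` in weight `k = 1/2`. -/
noncomputable def phiHatQuarterHalf (φ : ℝ → ℝ) : ℂ :=
  Complex.exp ((π : ℂ) * Complex.I / 4) *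
    Complex.ofReal (∫ u in Set.Ioi (0 : ℝ), Real.cos u * φ u * u ^ (-(3 : ℝ) / 2))

/-- `φ̂(i/4)` in weight `k = 3/2`. -/
noncomputable def phiHatQuarterThreeHalf (φ : ℝ → ℝ) : ℂ :=
  (1 / 2 : ℂ) * Complex.exp (3 * (π : ℂ) * Complex.I / 4) *
    Complex.ofReal (∫ u in Set.Ioi (0 : ℝ), Real.sin u * φ u * u ^ (-(3 : ℝ) / 2))

/-- `φ` is a measurable cutoff with values in `[0, 1]`, equal to `1` on the plateau `[q, r]` and
vanishing outside `(p, s)`; its values on the ramps `[p, q]` and `[r, s]` are arbitrary. It stands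
for the smoothed indicator function of `[a / (2 * x), a / x]` in the integrals for `φ̂(i/4)`. -/
structure IsPlateau (φ : ℝ → ℝ) (p q r s : ℝ) : Prop where
  measurable : Measurable φ
  mem_Icc : ∀ u, φ u ∈ Set.Icc 0 1
  eq_one : ∀ u, q ≤ u → u ≤ r → φ u = 1
  eq_zero_left : ∀ u, u ≤ p → φ u = 0
  eq_zero_right : ∀ u, s ≤ u → φ u = 0

namespace IsPlateau

variable {φ : ℝ → ℝ} {p q r s : ℝ}

lemma abs_le_one (hφ : IsPlateau φ p q r s) (u : ℝ) : |φ u| ≤ 1 := by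
  rw [abs_of_nonneg (hφ.mem_Icc u).1]
  exact (hφ.mem_Icc u).2

lemma intervalIntegrable_mul (hφ : IsPlateau φ p q r s) {F : ℝ → ℝ} {c d : ℝ}
    (hF : IntervalIntegrable F volume c d) :
    IntervalIntegrable (fun u => F u * φ u) volume c d := by
  rw [intervalIntegrable_iff] at hF ⊢
  exact hF.mul_bdd hφ.measurable.aestronglyMeasurable (.of_forall hφ.abs_le_one)

lemma setIntegral_Ioi_mul (hφ : IsPlateau φ p q r s) (F : ℝ → ℝ) {c : ℝ} (hcp : c ≤ p)
    (hps : p ≤ s) : ∫ u in Set.Ioi c, F u * φ u = ∫ u in p..s, F u * φ u := by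
  rw [intervalIntegral.integral_of_le hps]
  refine setIntegral_eq_of_subset_of_forall_sdiff_eq_zero measurableSet_Ioi
    (fun u hu => hcp.trans_lt hu.1) fun u hu => ?_
  obtain hup | hpu := le_or_gt u p
  · rw [hφ.eq_zero_left u hup, mul_zero]
  · rw [hφ.eq_zero_right u (le_of_not_ge fun hus => hu.2 ⟨hpu, hus⟩), mul_zero]

lemma abs_integral_mul_le (hφ : IsPlateau φ p q r s) {F : ℝ → ℝ} {c d M : ℝ} (hcd : c ≤ d)
    (hM : ∀ u ∈ Set.Ioc c d, |F u| ≤ M) : |∫ u in c..d, F u * φ u| ≤ M * (d - c) := by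
  rw [← abs_of_nonneg (sub_nonneg.2 hcd), ← norm_eq_abs (∫ u in c..d, F u * φ u)]
  refine intervalIntegral.norm_integral_le_of_norm_le_const fun u hu => ?_
  rw [Set.uIoc_of_le hcd] at hu
  rw [norm_mul]
  exact (mul_le_of_le_one_right (norm_nonneg _) (hφ.abs_le_one u)).trans (hM u hu)

lemma abs_setIntegral_mul_sub_le (hφ : IsPlateau φ p q r s) {F : ℝ → ℝ} {c M : ℝ} (hcp : c ≤ p)
    (hpq : p ≤ q) (hqr : q ≤ r) (hrs : r ≤ s) (hF : IntervalIntegrable F volume p s)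
    (hM : ∀ u ∈ Set.Ioc p s, |F u| ≤ M) :
    |(∫ u in Set.Ioi c, F u * φ u) - ∫ u in q..r, F u| ≤ M * ((q - p) + (s - r)) := by
  have hps : p ≤ s := hpq.trans (hqr.trans hrs)
  have hint : IntervalIntegrable (fun u => F u * φ u) volume p s := hφ.intervalIntegrable_mul hF
  have hq : q ∈ Set.uIcc p s := Set.mem_uIcc_of_le hpq (hqr.trans hrs)
  have hr : r ∈ Set.uIcc p s := Set.mem_uIcc_of_le (hpq.trans hqr) hrs
  have hsplit : ∫ u in p..s, F u * φ u = (∫ u in p..q, F u * φ u) + (∫ u in q..r, F u * φ u) +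
      ∫ u in r..s, F u * φ u := by
    have hpq_int := hint.mono_set (Set.uIcc_subset_uIcc_left hq)
    have hqr_int := hint.mono_set (Set.uIcc_subset_uIcc hq hr)
    rw [intervalIntegral.integral_add_adjacent_intervals hpq_int hqr_int,
      intervalIntegral.integral_add_adjacent_intervals (hpq_int.trans hqr_int)
        (hint.mono_set (Set.uIcc_subset_uIcc_right hr))]
  have hplateau : ∫ u in q..r, F u * φ u = ∫ u in q..r, F u := by
    refine intervalIntegral.integral_congr fun u hu => ?_
    rw [Set.uIcc_of_le hqr] at hu
    simp only [hφ.eq_one u hu.1 hu.2, mul_one]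
  have hleft : |∫ u in p..q, F u * φ u| ≤ M * (q - p) :=
    hφ.abs_integral_mul_le hpq fun u hu => hM u ⟨hu.1, hu.2.trans (hqr.trans hrs)⟩
  have hright : |∫ u in r..s, F u * φ u| ≤ M * (s - r) :=
    hφ.abs_integral_mul_le hrs fun u hu => hM u ⟨(hpq.trans hqr).trans_lt hu.1, hu.2⟩
  rw [hφ.setIntegral_Ioi_mul F hcp hps, hsplit, hplateau, add_right_comm, add_sub_cancel_right,
    mul_add]
  exact (abs_add_le _ _).trans (add_le_add hleft hright)

end IsPlateau

section LeadingTerm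

variable {f : ℝ → ℝ} {m : ℕ} {σ : ℝ}

lemma intervalIntegrable_rpow_of_pos {c d : ℝ} (hc : 0 < c) (hd : 0 < d) :
    IntervalIntegrable (fun u : ℝ => u ^ σ) volume c d :=
  intervalIntegral.intervalIntegrable_rpow (.inr (Set.notMem_uIcc_of_lt hc hd))

lemma intervalIntegrable_mul_rpow (hf : Continuous f) {c d : ℝ} (hc : 0 < c) (hd : 0 < d) :
    IntervalIntegrable (fun u => f u * u ^ σ) volume c d :=
  (intervalIntegrable_rpow_of_pos hc hd).continuousOn_mul hf.continuousOn

lemma abs_mul_rpow_le (hfm : ∀ u, 0 < u → |f u| ≤ u ^ m) {u : ℝ} (hu : 0 < u) :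
    |f u * u ^ σ| ≤ u ^ (m + σ) := by
  rw [abs_mul, abs_of_pos (rpow_pos_of_pos hu σ), rpow_add hu, rpow_natCast]
  exact mul_le_mul_of_nonneg_right (hfm u hu) (rpow_nonneg hu.le σ)

lemma abs_integral_mul_rpow_sub_le (hf : Continuous f)
    (hfm : ∀ u, 0 < u → |f u - u ^ m| ≤ u ^ (m + 2)) (hσ : m + σ ≤ 0) {q r : ℝ} (hq : 0 < q)
    (hqr : q ≤ r) :
    |(∫ u in q..r, f u * u ^ σ) - ∫ u in q..r, u ^ (m + σ)| ≤ q ^ (m + σ) * r ^ 2 * (r - q) := by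
  have hr : 0 < r := hq.trans_le hqr
  rw [← intervalIntegral.integral_sub (intervalIntegrable_mul_rpow hf hq hr)
    (intervalIntegrable_rpow_of_pos hq hr), ← abs_of_nonneg (sub_nonneg.2 hqr), ← norm_eq_abs]
  refine intervalIntegral.norm_integral_le_of_norm_le_const fun u hu => ?_
  rw [Set.uIoc_of_le hqr] at hu
  have hu0 : 0 < u := hq.trans hu.1
  have hfu : |f u - u ^ m| * u ^ σ ≤ u ^ (m + 2) * u ^ σ :=
    mul_le_mul_of_nonneg_right (hfm u hu0) (rpow_nonneg hu0.le σ)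
  calc ‖f u * u ^ σ - u ^ (m + σ)‖ = |f u - u ^ m| * u ^ σ := by
        rw [rpow_add hu0, rpow_natCast, ← sub_mul, norm_mul, norm_eq_abs,
          norm_of_nonneg (rpow_nonneg hu0.le σ)]
    _ ≤ u ^ (m + σ) * u ^ 2 := by
        rw [rpow_add hu0, rpow_natCast]
        rwa [pow_add, mul_right_comm] at hfu
    _ ≤ q ^ (m + σ) * r ^ 2 :=
        mul_le_mul (rpow_le_rpow_of_nonpos hq hu.1.le hσ) (pow_le_pow_left₀ hu0.le hu.2 2)
          (sq_nonneg u) (rpow_nonneg hq.le _)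

lemma IsPlateau.abs_setIntegral_mul_rpow_sub_le {φ : ℝ → ℝ} {p q r s : ℝ}
    (hφ : IsPlateau φ p q r s) (hp : 0 < p) (hpq : p ≤ q) (hqr : q ≤ r) (hrs : r ≤ s)
    (hf : Continuous f) (hfm : ∀ u, 0 < u → |f u| ≤ u ^ m)
    (hfm' : ∀ u, 0 < u → |f u - u ^ m| ≤ u ^ (m + 2)) (hσ : m + σ ≤ 0) :
    |(∫ u in Set.Ioi 0, f u * φ u * u ^ σ) - ∫ u in q..r, u ^ (m + σ)| ≤
      p ^ (m + σ) * ((q - p) + (s - r) + r ^ 2 * (r - q)) := by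
  have hs : 0 < s := hp.trans_le (hpq.trans (hqr.trans hrs))
  have hramps : |(∫ u in Set.Ioi 0, f u * u ^ σ * φ u) - ∫ u in q..r, f u * u ^ σ| ≤
      p ^ (m + σ) * ((q - p) + (s - r)) :=
    hφ.abs_setIntegral_mul_sub_le hp.le hpq hqr hrs (intervalIntegrable_mul_rpow hf hp hs)
      fun u hu => (abs_mul_rpow_le hfm (hp.trans hu.1)).trans
        (rpow_le_rpow_of_nonpos hp hu.1.le hσ)
  have htaylor : |(∫ u in q..r, f u * u ^ σ) - ∫ u in q..r, u ^ (m + σ)| ≤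
      p ^ (m + σ) * (r ^ 2 * (r - q)) := by
    refine (abs_integral_mul_rpow_sub_le hf hfm' hσ (hp.trans_le hpq) hqr).trans ?_
    rw [mul_assoc]
    exact mul_le_mul_of_nonneg_right (rpow_le_rpow_of_nonpos hp hpq hσ)
      (mul_nonneg (sq_nonneg r) (sub_nonneg.2 hqr))
  simp only [mul_right_comm (f _) (φ _)]
  rw [mul_add]
  exact (abs_sub_le _ _ _).trans (add_le_add hramps htaylor)

end LeadingTerm

lemma integral_rpow_half_self {κ r : ℝ} (hκ : κ ≠ 0) (hr : 0 < r) :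
    ∫ u in r / 2..r, u ^ (κ - 1) = (1 - 2 ^ (-κ)) / κ * r ^ κ := by
  rw [integral_rpow (.inr ⟨by simpa [sub_eq_iff_eq_add] using hκ,
    Set.notMem_uIcc_of_lt (half_pos hr) hr⟩), sub_add_cancel, div_rpow hr.le zero_le_two,
    rpow_neg zero_le_two]
  ring

lemma abs_cos_sub_one_le_sq (u : ℝ) : |cos u - 1| ≤ u ^ 2 := by
  rw [abs_sub_comm, abs_of_nonneg (sub_nonneg.2 (cos_le_one u))]
  linarith [one_sub_sq_div_two_le_cos (x := u), sq_nonneg u]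

lemma abs_sin_sub_self_le_pow_three {u : ℝ} (hu : 0 ≤ u) : |sin u - u| ≤ u ^ 3 := by
  have hsin := abs_sub_sin_le u
  rw [abs_sub_comm, abs_of_nonneg hu] at hsin
  linarith [pow_nonneg hu 3]

lemma norm_exp_mul_I_mul_ofReal_sub (θ A B : ℝ) :
    ‖Complex.exp (θ * Complex.I) * (A : ℂ) - Complex.exp (θ * Complex.I) * (B : ℂ)‖ =
      |A - B| := by
  rw [← mul_sub, ← Complex.ofReal_sub, norm_mul, Complex.norm_exp_ofReal_mul_I, one_mul,
    Complex.norm_real, norm_eq_abs]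

lemma norm_phiHatQuarterHalf_sub (φ : ℝ → ℝ) (B : ℝ) :
    ‖phiHatQuarterHalf φ - Complex.exp ((π : ℂ) * Complex.I / 4) * Complex.ofReal B‖ =
      |(∫ u in Set.Ioi (0 : ℝ), cos u * φ u * u ^ (-(3 : ℝ) / 2)) - B| := by
  rw [← norm_exp_mul_I_mul_ofReal_sub (π / 4), phiHatQuarterHalf,
    show (π : ℂ) * Complex.I / 4 = ((π / 4 : ℝ) : ℂ) * Complex.I by push_cast; ring]

lemma norm_phiHatQuarterThreeHalf_sub (φ : ℝ → ℝ) (B : ℝ) :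
    ‖phiHatQuarterThreeHalf φ - Complex.exp (3 * (π : ℂ) * Complex.I / 4) * Complex.ofReal B‖ =
      |(∫ u in Set.Ioi (0 : ℝ), sin u * φ u * u ^ (-(3 : ℝ) / 2)) - 2 * B| / 2 := by
  have hscale (A : ℝ) : |A - 2 * B| / 2 = |A / 2 - B| := by
    rw [show A / 2 - B = (A - 2 * B) / 2 by ring, abs_div, abs_two]
  rw [hscale, ← norm_exp_mul_I_mul_ofReal_sub (3 * π / 4), phiHatQuarterThreeHalf,
    show 3 * (π : ℂ) * Complex.I / 4 = ((3 * π / 4 : ℝ) : ℂ) * Complex.I by push_cast; ring]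
  push_cast
  ring_nf

section Cutoff

variable {φ : ℝ → ℝ} {x a T : ℝ}

lemma ramp_lengths_le (hx : 0 < x) (ha : 0 < a) (hT : 0 ≤ T) (hTx : T ≤ x / 3) :
    (a / (2 * x) - a / (2 * x + 2 * T)) + (a / (x - T) - a / x) ≤ 2 * (T / x) * (a / x) := by
  have hxT : 0 < x - T := by linarith
  have hleft : a / (2 * x) - a / (2 * x + 2 * T) = T / x * a / (2 * (x + T)) := by
    field_simp
    ring
  have hright : a / (x - T) - a / x = T / x * a / (x - T) := by
    field_simp
    ring
  calc (a / (2 * x) - a / (2 * x + 2 * T)) + (a / (x - T) - a / x)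
      ≤ T / x * a / (2 * x) + T / x * a / (2 / 3 * x) := by
        rw [hleft, hright]
        gcongr <;> linarith
    _ = 2 * (T / x) * (a / x) := by
        field_simp
        norm_num

lemma IsPlateau.abs_setIntegral_mul_rpow_sub_le_rpow
    (hφ : IsPlateau φ (a / (2 * x + 2 * T)) (a / (2 * x)) (a / x) (a / (x - T)))
    (hx : 0 < x) (ha : 0 < a) (hT : 0 ≤ T) (hTx : T ≤ x / 3) {f : ℝ → ℝ} {m : ℕ} {σ κ : ℝ}
    (hf : Continuous f) (hfm : ∀ u, 0 < u → |f u| ≤ u ^ m)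
    (hfm' : ∀ u, 0 < u → |f u - u ^ m| ≤ u ^ (m + 2)) (hκ : m + σ = κ - 1) (hκ0 : κ ≠ 0)
    (hκ1 : κ ≤ 1) :
    |(∫ u in Set.Ioi 0, f u * φ u * u ^ σ) - (1 - 2 ^ (-κ)) / κ * (a / x) ^ κ| ≤
      2 * 3 ^ (1 - κ) * (T / x * (a / x) ^ κ + (a / x) ^ (κ + 2)) := by
  have hr : 0 < a / x := by positivity
  have hxT : 0 < x - T := by linarith
  have hσ : m + σ ≤ 0 := by linarith
  have hhalf : a / (2 * x) = a / x / 2 := by ring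
  have hp : a / x / 3 ≤ a / (2 * x + 2 * T) := by
    rw [div_div]
    exact div_le_div_of_nonneg_left ha.le (by positivity) (by linarith)
  have hlengths : (a / (2 * x) - a / (2 * x + 2 * T)) + (a / (x - T) - a / x) +
      (a / x) ^ 2 * (a / x - a / (2 * x)) ≤ 2 * (T / x * (a / x) + (a / x) ^ 3) := by
    have hramps := ramp_lengths_le hx ha hT hTx
    rw [hhalf] at hramps ⊢
    linarith [pow_pos hr 3]
  have hmain := hφ.abs_setIntegral_mul_rpow_sub_le (by positivity) (by gcongr; linarith)
    (by gcongr; linarith) (by gcongr; linarith) hf hfm hfm' hσ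
  rw [hκ, hhalf, integral_rpow_half_self hκ0 hr, ← hhalf] at hmain
  refine hmain.trans ?_
  calc (a / (2 * x + 2 * T)) ^ (κ - 1) * _
      ≤ (a / (2 * x + 2 * T)) ^ (κ - 1) * (2 * (T / x * (a / x) + (a / x) ^ 3)) :=
        mul_le_mul_of_nonneg_left hlengths (by positivity)
    _ ≤ (a / x / 3) ^ (κ - 1) * (2 * (T / x * (a / x) + (a / x) ^ 3)) :=
        mul_le_mul_of_nonneg_right (rpow_le_rpow_of_nonpos (by positivity) hp (by linarith))
          (by positivity)
    _ = 2 * 3 ^ (1 - κ) * (T / x * (a / x) ^ κ + (a / x) ^ (κ + 2)) := by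
        rw [div_rpow hr.le zero_le_three, rpow_sub_one hr.ne', rpow_add hr, rpow_ofNat,
          ← neg_sub κ 1, rpow_neg zero_le_three]
        field_simp

theorem norm_phiHatQuarterHalf_sub_le
    (hφ : IsPlateau φ (a / (2 * x + 2 * T)) (a / (2 * x)) (a / x) (a / (x - T)))
    (hx : 0 < x) (ha : 0 < a) (hT : 0 ≤ T) (hTx : T ≤ x / 3) :
    ‖phiHatQuarterHalf φ - Complex.exp ((π : ℂ) * Complex.I / 4) *
        Complex.ofReal (2 * (√2 - 1) * (x / a) ^ ((1 : ℝ) / 2))‖ ≤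
      18 * (T / x * (x / a) ^ ((1 : ℝ) / 2) + (a / x) ^ ((3 : ℝ) / 2)) := by
  have hbound := hφ.abs_setIntegral_mul_rpow_sub_le_rpow hx ha hT hTx (m := 0) (σ := -3 / 2)
    (κ := -(1 / 2)) continuous_cos (fun u _ => by simpa using abs_cos_le_one u)
    (fun u _ => by simpa using abs_cos_sub_one_le_sq u) (by norm_num) (by norm_num) (by norm_num)
  have hpow : (a / x) ^ (-(1 / 2) : ℝ) = (x / a) ^ ((1 : ℝ) / 2) := by
    rw [rpow_neg (by positivity), ← inv_rpow (by positivity), inv_div]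
  have hmain : (1 - 2 ^ (-(-(1 / 2) : ℝ))) / (-(1 / 2) : ℝ) = 2 * (√2 - 1) := by
    rw [neg_neg, ← sqrt_eq_rpow]
    ring
  have hconst : 2 * (3 : ℝ) ^ (1 - -(1 / 2) : ℝ) ≤ 18 := by
    calc 2 * (3 : ℝ) ^ (1 - -(1 / 2) : ℝ) ≤ 2 * 3 ^ (2 : ℝ) := by gcongr <;> norm_num
      _ = 18 := by norm_num
  rw [hpow, hmain, show (-(1 / 2) + 2 : ℝ) = 3 / 2 by norm_num] at hbound
  rw [norm_phiHatQuarterHalf_sub]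
  exact hbound.trans (mul_le_mul_of_nonneg_right hconst (by positivity))

theorem norm_phiHatQuarterThreeHalf_sub_le
    (hφ : IsPlateau φ (a / (2 * x + 2 * T)) (a / (2 * x)) (a / x) (a / (x - T)))
    (hx : 0 < x) (ha : 0 < a) (hT : 0 ≤ T) (hTx : T ≤ x / 3) :
    ‖phiHatQuarterThreeHalf φ - Complex.exp (3 * (π : ℂ) * Complex.I / 4) *
        Complex.ofReal ((1 - 1 / √2) * (a / x) ^ ((1 : ℝ) / 2))‖ ≤
      3 * (T / x * (a / x) ^ ((1 : ℝ) / 2) + (a / x) ^ ((5 : ℝ) / 2)) := by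
  have hbound := hφ.abs_setIntegral_mul_rpow_sub_le_rpow hx ha hT hTx (m := 1) (σ := -3 / 2)
    (κ := 1 / 2) continuous_sin
    (fun u hu => by simpa [abs_of_pos hu] using abs_sin_le_abs (x := u))
    (fun u hu => by simpa using abs_sin_sub_self_le_pow_three hu.le) (by norm_num) (by norm_num)
    (by norm_num)
  have hmain : (1 - 2 ^ (-(1 / 2) : ℝ)) / (1 / 2 : ℝ) = 2 * (1 - 1 / √2) := by
    rw [rpow_neg zero_le_two, ← sqrt_eq_rpow]
    ring
  have hconst : 2 * (3 : ℝ) ^ (1 - 1 / 2 : ℝ) ≤ 2 * 3 := by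
    calc 2 * (3 : ℝ) ^ (1 - 1 / 2 : ℝ) ≤ 2 * 3 ^ (1 : ℝ) := by gcongr <;> norm_num
      _ = 2 * 3 := by rw [rpow_one]
  rw [hmain, show (1 / 2 + 2 : ℝ) = 5 / 2 by norm_num] at hbound
  rw [norm_phiHatQuarterThreeHalf_sub, ← mul_assoc, div_le_iff₀' zero_lt_two, ← mul_assoc]
  exact hbound.trans (mul_le_mul_of_nonneg_right hconst (by positivity))

end Cutoff

lemma rpow_neg_le_one_div {b x δ : ℝ} (hb : 0 < b) (hδ : 0 < δ) (hx : b ^ (1 / δ) ≤ x) :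
    x ^ (-δ) ≤ 1 / b := by
  have hx0 : 0 < x := (rpow_pos_of_pos hb _).trans_le hx
  rw [one_div, rpow_inv_le_iff_of_pos hb.le hx0.le hδ] at hx
  rw [rpow_neg hx0.le, one_div]
  exact inv_anti₀ hb hx

lemma add_rpow_le_pow_mul_add_one {E r L c : ℝ} {n : ℕ} (hE : 0 ≤ E) (hr : 0 ≤ r) (hrL : r ≤ L)
    (hc : 0 ≤ c) (hcn : c ≤ n) : E + r ^ c ≤ (1 + L) ^ n * (E + 1) := by
  have hL : 1 ≤ 1 + L := by linarith
  have hE' : E ≤ (1 + L) ^ n * E := le_mul_of_one_le_left hE (one_le_pow₀ hL)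
  have hr' : r ^ c ≤ (1 + L) ^ n := by
    calc r ^ c ≤ (1 + L) ^ c := rpow_le_rpow hr (by linarith) hc
      _ ≤ (1 + L) ^ (n : ℝ) := rpow_le_rpow_of_exponent_le hL hcn
      _ = (1 + L) ^ n := rpow_natCast _ _
  linarith

theorem stmt8_general {δ L x a T : ℝ} {φ : ℝ → ℝ} (hδ : 0 < δ) (hx : (3 : ℝ) ^ (1 / δ) ≤ x)
    (hT : T = x ^ (1 - δ)) (ha : 0 < a) (hL : a / (x - T) ≤ L)
    (hφ : IsPlateau φ (a / (2 * x + 2 * T)) (a / (2 * x)) (a / x) (a / (x - T))) :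
    ‖phiHatQuarterHalf φ - Complex.exp ((π : ℂ) * Complex.I / 4) *
        Complex.ofReal (2 * (√2 - 1) * (x / a) ^ ((1 : ℝ) / 2))‖ ≤
      18 * (1 + L) ^ 3 * (x ^ (-δ) * (x / a) ^ ((1 : ℝ) / 2) + 1) ∧
    ‖phiHatQuarterThreeHalf φ - Complex.exp (3 * (π : ℂ) * Complex.I / 4) *
        Complex.ofReal ((1 - 1 / √2) * (a / x) ^ ((1 : ℝ) / 2))‖ ≤
      18 * (1 + L) ^ 3 * (x ^ (-δ) * (a / x) ^ ((1 : ℝ) / 2) + 1) := by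
  have hx0 : 0 < x := (by positivity : (0 : ℝ) < 3 ^ (1 / δ)).trans_le hx
  have hT0 : 0 ≤ T := hT ▸ rpow_nonneg hx0.le _
  have hTδ : T / x = x ^ (-δ) := by
    rw [hT, ← rpow_sub_one hx0.ne', sub_sub_cancel_left]
  have hT3 : T ≤ x / 3 := by
    have := hTδ.trans_le (rpow_neg_le_one_div three_pos hδ hx)
    rw [div_le_iff₀ hx0] at this
    linarith
  have hrL : a / x ≤ L :=
    (div_le_div_of_nonneg_left ha.le (by linarith) (by linarith)).trans hL
  have hr : 0 ≤ a / x := by positivity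
  have hhalf := norm_phiHatQuarterHalf_sub_le hφ hx0 ha hT0 hT3
  have hthreeHalf := norm_phiHatQuarterThreeHalf_sub_le hφ hx0 ha hT0 hT3
  rw [hTδ] at hhalf hthreeHalf
  have hpowL {E c : ℝ} (hE : 0 ≤ E) (hc : 0 ≤ c) (hc3 : c ≤ (3 : ℕ)) :
      18 * (E + (a / x) ^ c) ≤ 18 * (1 + L) ^ 3 * (E + 1) := by
    rw [mul_assoc]
    exact mul_le_mul_of_nonneg_left (add_rpow_le_pow_mul_add_one hE hr hrL hc hc3) (by norm_num)
  constructor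
  · exact hhalf.trans (hpowL (by positivity) (by norm_num) (by norm_num))
  · calc _ ≤ 3 * (x ^ (-δ) * (a / x) ^ ((1 : ℝ) / 2) + (a / x) ^ ((5 : ℝ) / 2)) := hthreeHalf
      _ ≤ 18 * (x ^ (-δ) * (a / x) ^ ((1 : ℝ) / 2) + (a / x) ^ ((5 : ℝ) / 2)) := by
        gcongr
        norm_num
      _ ≤ _ := hpowL (by positivity) (by norm_num) (by norm_num)

theorem stmt8 :
    ∀ δ : ℝ, 0 < δ → δ < 1 / 2 →
      ∃ C : ℝ, ∀ (x a T T' : ℝ) (φ : ℝ → ℝ),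
        (3 : ℝ) ^ (1 / δ) ≤ x → T = x ^ (1 - δ) → T' = x ^ (1 - 2 * δ) →
        0 < a → a / (x - T) ≤ 1.999 →
        ContDiff ℝ 1 φ → (∀ u, 0 ≤ φ u ∧ φ u ≤ 1) →
        (∀ u, a / (2 * x) ≤ u → u ≤ a / x → φ u = 1) →
        (∀ u, u ≤ a / (2 * x + 2 * T) → φ u = 0) →
        (∀ u, a / (x - T) ≤ u → φ u = 0) →
        (∀ u ∈ Set.Ioo (a / (2 * x + 2 * T - 2 * T')) (a / (2 * x + 2 * T')),
          deriv φ u = 2 * x * (x + T) / (a * T)) →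
        (∀ u ∈ Set.Ioo (a / (x - T')) (a / (x - T + T')),
          deriv φ u = -(x * (x - T)) / (a * T)) →
        (∀ u ∈ Set.Ioo (a / (2 * x + 2 * T)) (a / (2 * x + 2 * T - 2 * T')) ∪
            Set.Ioo (a / (2 * x + 2 * T')) (a / (2 * x)),
          0 ≤ deriv φ u ∧ deriv φ u ≤ 4 * x * (x + T) / (a * T)) →
        (∀ u ∈ Set.Ioo (a / x) (a / (x - T')) ∪ Set.Ioo (a / (x - T + T')) (a / (x - T)),
          -(2 * x * (x - T)) / (a * T) ≤ deriv φ u ∧ deriv φ u ≤ 0) →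
        (∀ u, u ∉ Set.Icc (a / (2 * x + 2 * T)) (a / (2 * x)) ∪
            Set.Icc (a / x) (a / (x - T)) → deriv φ u = 0) →
        ‖phiHatQuarterHalf φ -
            Complex.exp ((π : ℂ) * Complex.I / 4) *
              Complex.ofReal (2 * (Real.sqrt 2 - 1) * (x / a) ^ ((1 : ℝ) / 2))‖ ≤
          C * (x ^ (-δ) * (x / a) ^ ((1 : ℝ) / 2) + 1) ∧
        ‖phiHatQuarterThreeHalf φ -
            Complex.exp (3 * (π : ℂ) * Complex.I / 4) *
              Complex.ofReal ((1 - 1 / Real.sqrt 2) * (a / x) ^ ((1 : ℝ) / 2))‖ ≤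
          C * (x ^ (-δ) * (a / x) ^ ((1 : ℝ) / 2) + 1) := by
  intro δ hδ _
  refine ⟨18 * (1 + 1.999) ^ 3, ?_⟩
  intro x a T _ φ hx hT _ ha hL hφ hφ01 hφ_one hφ_left hφ_right _ _ _ _ _
  exact stmt8_general hδ hx hT ha hL ⟨hφ.continuous.measurable, hφ01, hφ_one, hφ_left, hφ_right⟩
end

section
/- There exists an absolute constant C such that for every half-integer K ≥ 5/2 (K ∈ ℤ + 1/2), every real n ≥ 1, and every x > 0, the derivative with respect to x of the function x ↦ x^{−1/2} · J_{K−1}(4πn/x) satisfies | d/dx ( x^{−1/2} J_{K−1}(4πn/x) ) | ≤ C·( n^{−1/3} x^{−7/6} + n^{2/3} x^{−13/6} ). -/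
open Real MeasureTheory

/-- The J-Bessel function of complex order `ν` at real argument `u`, defined by the series
`J_ν(u) = Σ_{j=0}^∞ ((−1)^j / (j! · Γ(j+1+ν))) · (u/2)^{2j+ν}`, where
`(u/2)^ν := exp(ν · log(u/2))` with the real logarithm. -/
noncomputable def besselJ (ν : ℂ) (u : ℝ) : ℂ :=
  ∑' j : ℕ, ((-1 : ℂ) ^ j / ((Nat.factorial j : ℂ) * Complex.Gamma ((j : ℂ) + 1 + ν))) *
    Complex.exp ((2 * (j : ℂ) + ν) * (Real.log (u / 2) : ℂ))

/-!
The function `w(u) = √u J_ν(u)` solves `w'' = (μ / u² - 1) w` with `μ = ν² - 1/4`, so for `ν ≥ 1/2`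
the Sonine energy `w'² + (1 - μ / u²) w²` increases with `u`. Its supremum over `u` does not grow
when `ν` increases by one, because as `u → ∞` the recurrences for `J_ν` act on `(w, w')` as nearly
orthogonal maps; hence it is bounded uniformly in `ν ≥ 1/2` once it is for `1/2 ≤ ν ≤ 3/2`, where
Grönwall's inequality for `w² + w'²` reduces the bound to `u = 1` and compactness in `ν` gives it.
Beyond the turning point `u² = μ` the energy dominates `w'²`, and before it `w w' ≥ 0` makes `w'²`
increasing, so `w'` is bounded uniformly in `u` and `ν`. Since
`x^{-1/2} J_ν(a / x) = a^{-1/2} w(a / x)`, the derivative in question is `O(√n / x²)`, and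
`√n / x²` is a weighted geometric mean of the two terms of the claimed bound.
-/

open Filter Set Topology

/-! ### The Bessel–Clifford function -/

/-- The coefficients `1 / (k! Γ(k + 1 + ν))` of the Bessel–Clifford power series. -/
noncomputable def besselCliffordCoeff (ν : ℝ) (k : ℕ) : ℝ :=
  ((k.factorial : ℝ) * Gamma (k + 1 + ν))⁻¹

/-- The Bessel–Clifford function `C_ν(z) = ∑ z^k / (k! Γ(k + 1 + ν))`, the entire function for which
`J_ν(u) = (u / 2)^ν C_ν(-(u / 2)²)`. -/
noncomputable def besselClifford (ν z : ℝ) : ℝ :=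
  ∑' k : ℕ, besselCliffordCoeff ν k * z ^ k

section BesselClifford

variable {ν : ℝ}

lemma besselCliffordCoeff_nonneg (hν : 0 ≤ ν) (k : ℕ) : 0 ≤ besselCliffordCoeff ν k :=
  inv_nonneg.2 (mul_nonneg (by positivity) (Gamma_nonneg_of_nonneg (by positivity)))

lemma Gamma_add_one_le_Gamma_nat_add (hν : 0 ≤ ν) (k : ℕ) :
    Gamma (ν + 1) ≤ Gamma (k + 1 + ν) := by
  induction k with
  | zero => simp [add_comm]
  | succ k ih =>
    have hpos : 0 < Gamma (k + 1 + ν) := Gamma_pos_of_pos (by positivity)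
    calc Gamma (ν + 1) ≤ Gamma (k + 1 + ν) := ih
      _ ≤ (k + 1 + ν) * Gamma (k + 1 + ν) :=
          le_mul_of_one_le_left hpos.le (by linarith [k.cast_nonneg (α := ℝ)])
      _ = Gamma (k + 1 + ν + 1) := (Gamma_add_one (by positivity)).symm
      _ = Gamma ((k + 1 : ℕ) + 1 + ν) := by push_cast; ring_nf

lemma besselCliffordCoeff_le (hν : 0 ≤ ν) (k : ℕ) :
    besselCliffordCoeff ν k ≤ (Gamma (ν + 1))⁻¹ * (k.factorial : ℝ)⁻¹ := by
  have : 0 < Gamma (ν + 1) := Gamma_pos_of_pos (by positivity)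
  rw [besselCliffordCoeff, mul_inv, mul_comm]
  gcongr
  exact Gamma_add_one_le_Gamma_nat_add hν k

lemma norm_besselCliffordCoeff_mul_pow_le (hν : 0 ≤ ν) (z : ℝ) (k : ℕ) :
    ‖besselCliffordCoeff ν k * z ^ k‖ ≤ (Gamma (ν + 1))⁻¹ * (|z| ^ k / k.factorial) := by
  rw [norm_mul, norm_pow, norm_of_nonneg (besselCliffordCoeff_nonneg hν k), norm_eq_abs,
    div_eq_inv_mul, ← mul_assoc]
  gcongr
  exact besselCliffordCoeff_le hν k

lemma summable_besselClifford (hν : 0 ≤ ν) (z : ℝ) :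
    Summable fun k => besselCliffordCoeff ν k * z ^ k :=
  .of_norm_bounded ((summable_pow_div_factorial |z|).mul_left _)
    (norm_besselCliffordCoeff_mul_pow_le hν z)

lemma abs_besselClifford_le (hν : 0 ≤ ν) (z : ℝ) :
    |besselClifford ν z| ≤ (Gamma (ν + 1))⁻¹ * exp |z| := by
  have hexp : HasSum (fun k : ℕ => |z| ^ k / k.factorial) (exp |z|) := by
    simpa only [exp_eq_exp_ℝ] using NormedSpace.expSeries_div_hasSum_exp |z|
  exact tsum_of_norm_bounded (hexp.mul_left _) (norm_besselCliffordCoeff_mul_pow_le hν z)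

lemma besselCliffordCoeff_succ_mul (ν : ℝ) (k : ℕ) :
    besselCliffordCoeff ν (k + 1) * (k + 1) = besselCliffordCoeff (ν + 1) k := by
  have hk : (k : ℝ) + 1 ≠ 0 := by positivity
  have hΓ : ((k + 1 : ℕ) : ℝ) + 1 + ν = k + 1 + (ν + 1) := by push_cast; ring
  rw [besselCliffordCoeff, besselCliffordCoeff, hΓ, Nat.factorial_succ, Nat.cast_mul,
    Nat.cast_succ, mul_assoc, mul_inv, mul_comm, mul_inv_cancel_left₀ hk]

lemma besselCliffordCoeff_eq_mul (hν : 0 ≤ ν) (k : ℕ) :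
    besselCliffordCoeff ν k = (k + 1 + ν) * besselCliffordCoeff (ν + 1) k := by
  have hpos : (k : ℝ) + 1 + ν ≠ 0 := by positivity
  rw [besselCliffordCoeff, besselCliffordCoeff, ← add_assoc, Gamma_add_one hpos, mul_left_comm,
    mul_inv (_ + _), mul_inv_cancel_left₀ hpos]

lemma hasDerivAt_besselClifford_tsum (hν : 0 ≤ ν) (z : ℝ) :
    HasDerivAt (besselClifford ν) (∑' k : ℕ, besselCliffordCoeff ν k * (k * z ^ (k - 1))) z := by
  set R := |z| + 1
  have hR : 0 < R := by positivity
  have hmajorant : Summable fun k : ℕ => besselCliffordCoeff ν k * (k * R ^ (k - 1)) := by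
    rw [← summable_nat_add_iff 1]
    refine (summable_besselClifford (add_nonneg hν zero_le_one) R).congr fun k => ?_
    rw [← besselCliffordCoeff_succ_mul, Nat.add_sub_cancel, Nat.cast_succ, mul_assoc]
  refine hasDerivAt_tsum_of_isPreconnected (t := Metric.ball 0 R) (y₀ := 0) hmajorant
    Metric.isOpen_ball (convex_ball 0 R).isPreconnected
    (fun k y _ => (hasDerivAt_pow k y).const_mul (besselCliffordCoeff ν k)) (fun k y hy => ?_)
    (Metric.mem_ball_self hR) (summable_besselClifford hν 0) (by simp [R])
  have hyR : ‖y‖ ≤ R := (mem_ball_zero_iff.1 hy).le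
  rw [norm_mul, norm_mul, norm_pow, norm_natCast, norm_of_nonneg (besselCliffordCoeff_nonneg hν k)]
  have := besselCliffordCoeff_nonneg hν k
  gcongr

theorem hasDerivAt_besselClifford (hν : 0 ≤ ν) (z : ℝ) :
    HasDerivAt (besselClifford ν) (besselClifford (ν + 1) z) z := by
  have hterm (k : ℕ) : besselCliffordCoeff ν (k + 1) * ((k + 1 : ℕ) * z ^ (k + 1 - 1)) =
      besselCliffordCoeff (ν + 1) k * z ^ k := by
    rw [← besselCliffordCoeff_succ_mul, Nat.add_sub_cancel, Nat.cast_succ, mul_assoc]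
  have hsummable : Summable fun k : ℕ => besselCliffordCoeff ν k * (k * z ^ (k - 1)) := by
    rw [← summable_nat_add_iff 1]
    simpa only [hterm] using summable_besselClifford (add_nonneg hν zero_le_one) z
  refine (hasDerivAt_besselClifford_tsum hν z).congr_deriv ?_
  rw [hsummable.tsum_eq_zero_add]
  simp only [hterm, Nat.cast_zero, zero_mul, mul_zero, zero_add, besselClifford]

theorem besselClifford_eq_add (hν : 0 ≤ ν) (z : ℝ) :
    besselClifford ν z =
      (ν + 1) * besselClifford (ν + 1) z + z * besselClifford (ν + 2) z := by
  have hν₁ : 0 ≤ ν + 1 := by positivity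
  have hν₂ : 0 ≤ ν + 2 := by positivity
  have hterm (k : ℕ) : besselCliffordCoeff ν (k + 1) * z ^ (k + 1) =
      (ν + 1) * (besselCliffordCoeff (ν + 1) (k + 1) * z ^ (k + 1)) +
        z * (besselCliffordCoeff (ν + 2) k * z ^ k) := by
    have hshift := besselCliffordCoeff_succ_mul (ν + 1) k
    rw [add_assoc, one_add_one_eq_two] at hshift
    rw [besselCliffordCoeff_eq_mul hν, ← hshift]
    push_cast
    ring
  have htail := (summable_nat_add_iff 1).2 (summable_besselClifford hν₁ z)
  simp only [besselClifford]
  rw [(summable_besselClifford hν z).tsum_eq_zero_add,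
    (summable_besselClifford hν₁ z).tsum_eq_zero_add, mul_add, add_assoc, ← tsum_mul_left,
    ← tsum_mul_left, ← (htail.mul_left _).tsum_add ((summable_besselClifford hν₂ z).mul_left _)]
  congr 1
  · rw [besselCliffordCoeff_eq_mul hν]
    push_cast
    ring
  · exact tsum_congr hterm

end BesselClifford

/-! ### The Bessel function of real order -/

/-- The Bessel function `J_ν` of real order as a real-valued function, which agrees with `besselJ`
on the positive half-line. -/
noncomputable def realBesselJ (ν u : ℝ) : ℝ :=
  (u / 2) ^ ν * besselClifford ν (-(u / 2) ^ 2)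

section RealBesselJ

variable {ν u : ℝ}

theorem besselJ_ofReal (ν : ℝ) (hu : 0 < u) : besselJ ν u = (realBesselJ ν u : ℂ) := by
  have hu₂ : 0 < u / 2 := by positivity
  have hpow (k : ℕ) : exp ((2 * k + ν) * log (u / 2)) = (u / 2) ^ ν * ((u / 2) ^ 2) ^ k := by
    rw [mul_comm, ← rpow_def_of_pos hu₂, rpow_add hu₂, mul_comm, ← pow_mul]
    norm_cast
  rw [besselJ, realBesselJ, besselClifford, ← tsum_mul_left, Complex.ofReal_tsum]
  refine tsum_congr fun k => ?_
  have hΓ : Complex.Gamma (k + 1 + ν) = (Gamma (k + 1 + ν) : ℂ) := by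
    rw [← Complex.Gamma_ofReal]; push_cast; rfl
  have hexp : Complex.exp ((2 * k + ν) * (log (u / 2) : ℂ)) =
      (((u / 2) ^ ν * ((u / 2) ^ 2) ^ k : ℝ) : ℂ) := by
    rw [← hpow]; push_cast; rfl
  rw [hΓ, hexp, besselCliffordCoeff, neg_pow ((u / 2) ^ 2)]
  push_cast
  ring

lemma hasDerivAt_half_rpow (ν : ℝ) (hu : 0 < u) :
    HasDerivAt (fun u : ℝ => (u / 2) ^ ν) (ν / u * (u / 2) ^ ν) u := by
  have hu₂ : u / 2 ≠ 0 := by positivity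
  refine (((hasDerivAt_id u).div_const 2).rpow_const (p := ν) (Or.inl hu₂)).congr_deriv ?_
  rw [id, rpow_sub_one hu₂]
  field_simp

lemma hasDerivAt_besselClifford_neg_half_sq (hν : 0 ≤ ν) (u : ℝ) :
    HasDerivAt (fun u : ℝ => besselClifford ν (-(u / 2) ^ 2))
      (-(u / 2) * besselClifford (ν + 1) (-(u / 2) ^ 2)) u := by
  have hinner : HasDerivAt (fun u : ℝ => -(u / 2) ^ 2) (-(u / 2)) u := by
    refine (((hasDerivAt_id u).div_const 2).pow 2).neg.congr_deriv ?_
    simp only [id]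
    ring
  exact ((hasDerivAt_besselClifford hν _).comp u hinner).congr_deriv (mul_comm _ _)

theorem hasDerivAt_realBesselJ (hν : 0 ≤ ν) (hu : 0 < u) :
    HasDerivAt (realBesselJ ν) (ν / u * realBesselJ ν u - realBesselJ (ν + 1) u) u := by
  have hu₂ : u / 2 ≠ 0 := by positivity
  refine ((hasDerivAt_half_rpow ν hu).mul
    (hasDerivAt_besselClifford_neg_half_sq hν u)).congr_deriv ?_
  rw [realBesselJ, realBesselJ, rpow_add_one hu₂]
  ring

theorem realBesselJ_add_two (hν : 0 ≤ ν) (hu : 0 < u) :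
    realBesselJ (ν + 2) u = 2 * (ν + 1) / u * realBesselJ (ν + 1) u - realBesselJ ν u := by
  have hu₂ : u / 2 ≠ 0 := by positivity
  have hpow : (u / 2) ^ (ν + 2) = (u / 2) ^ ν * (u / 2) ^ 2 := by
    exact_mod_cast rpow_add_natCast hu₂ ν 2
  rw [realBesselJ, realBesselJ, realBesselJ, besselClifford_eq_add hν, rpow_add_one hu₂, hpow]
  field_simp
  ring

lemma tendsto_realBesselJ_zero (hν : 0 < ν) : Tendsto (realBesselJ ν) (𝓝[>] 0) (𝓝 0) := by
  have hpow : ContinuousAt (fun u : ℝ => (u / 2) ^ ν) 0 :=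
    (continuousAt_id.div_const 2).rpow_const (Or.inr hν.le)
  have hcont : ContinuousAt (realBesselJ ν) 0 :=
    hpow.mul (hasDerivAt_besselClifford_neg_half_sq hν.le 0).continuousAt
  have hzero : realBesselJ ν 0 = 0 := by simp [realBesselJ, zero_rpow hν.ne']
  simpa only [hzero] using hcont.tendsto.mono_left nhdsWithin_le_nhds

lemma exists_forall_abs_realBesselJ_le (hu : 0 < u) (b : ℝ) :
    ∃ M, ∀ ν ∈ Icc 0 b, |realBesselJ ν u| ≤ M := by
  have hcont : ContinuousOn (fun ν => (u / 2) ^ ν * ((Gamma (ν + 1))⁻¹ * exp |-(u / 2) ^ 2|))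
      (Icc 0 b) := by
    intro ν hν
    have hν₁ : 0 < ν + 1 := by linarith [hν.1]
    have hΓ₁ : ContinuousAt Gamma (ν + 1) :=
      (differentiableOn_Gamma_Ioi.differentiableAt (Ioi_mem_nhds hν₁)).continuousAt
    have hΓ : ContinuousAt (fun ν => (Gamma (ν + 1))⁻¹) ν :=
      (hΓ₁.comp (f := fun ν => ν + 1) (continuousAt_id.add_const 1)).inv₀
        (Gamma_pos_of_pos hν₁).ne'
    exact ((continuousAt_const_rpow (by positivity)).mul
      (hΓ.mul continuousAt_const)).continuousWithinAt
  obtain ⟨M, hM⟩ := isCompact_Icc.exists_bound_of_continuousOn hcont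
  refine ⟨M, fun ν hν => ?_⟩
  calc |realBesselJ ν u| = (u / 2) ^ ν * |besselClifford ν (-(u / 2) ^ 2)| := by
        rw [realBesselJ, abs_mul, abs_of_pos (by positivity)]
    _ ≤ (u / 2) ^ ν * ((Gamma (ν + 1))⁻¹ * exp |-(u / 2) ^ 2|) := by
        gcongr
        exact abs_besselClifford_le hν.1 _
    _ ≤ M := (le_abs_self _).trans (hM ν hν)

end RealBesselJ

/-! ### The Riccati–Bessel function -/

/-- The Riccati–Bessel function `√u J_ν(u)`, the solution of Bessel's equation in Liouville normal
form, taken without the customary factor `√(π / 2)`. -/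
noncomputable def riccatiBessel (ν u : ℝ) : ℝ :=
  √u * realBesselJ ν u

/-- The derivative of `riccatiBessel ν` on the positive half-line, in the form given by the
recurrences for Bessel functions. -/
noncomputable def riccatiBesselDeriv (ν u : ℝ) : ℝ :=
  (ν + 1 / 2) / u * riccatiBessel ν u - riccatiBessel (ν + 1) u

section RiccatiBessel

variable {ν u : ℝ}

theorem hasDerivAt_riccatiBessel (hν : 0 ≤ ν) (hu : 0 < u) :
    HasDerivAt (riccatiBessel ν) (riccatiBesselDeriv ν u) u := by
  refine ((hasDerivAt_sqrt hu.ne').mul (hasDerivAt_realBesselJ hν hu)).congr_deriv ?_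
  have hsq : √u ^ 2 = u := sq_sqrt hu.le
  have : 0 < √u := sqrt_pos.2 hu
  simp only [riccatiBesselDeriv, riccatiBessel]
  field_simp
  rw [hsq]
  ring

lemma riccatiBessel_add_one (ν u : ℝ) :
    riccatiBessel (ν + 1) u = (ν + 1 / 2) / u * riccatiBessel ν u - riccatiBesselDeriv ν u := by
  rw [riccatiBesselDeriv, sub_sub_cancel]

lemma riccatiBesselDeriv_add_one (hν : 0 ≤ ν) (hu : 0 < u) :
    riccatiBesselDeriv (ν + 1) u =
      riccatiBessel ν u - (ν + 1 / 2) / u * riccatiBessel (ν + 1) u := by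
  rw [riccatiBesselDeriv, add_assoc ν 1 1, one_add_one_eq_two]
  simp only [riccatiBessel]
  rw [realBesselJ_add_two hν hu]
  ring

theorem hasDerivAt_riccatiBesselDeriv (hν : 0 ≤ ν) (hu : 0 < u) :
    HasDerivAt (riccatiBesselDeriv ν) (((ν ^ 2 - 1 / 4) / u ^ 2 - 1) * riccatiBessel ν u) u := by
  have hquot : HasDerivAt (fun u : ℝ => (ν + 1 / 2) / u) (-(ν + 1 / 2) / u ^ 2) u := by
    refine ((hasDerivAt_inv hu.ne').const_mul (ν + 1 / 2)).congr_deriv ?_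
    ring
  refine ((hquot.mul (hasDerivAt_riccatiBessel hν hu)).sub
    (hasDerivAt_riccatiBessel (add_nonneg hν zero_le_one) hu)).congr_deriv ?_
  rw [riccatiBesselDeriv_add_one hν hu, riccatiBessel_add_one]
  ring

end RiccatiBessel

/-! ### Energies of the Riccati–Bessel function -/

/-- The Sonine energy `w'² + (1 - (ν² - 1/4) / u²) w²` of `w = riccatiBessel ν`, whose derivative
contains no `w'`. -/
noncomputable def sonineEnergy (ν u : ℝ) : ℝ :=
  riccatiBesselDeriv ν u ^ 2 + (1 - (ν ^ 2 - 1 / 4) / u ^ 2) * riccatiBessel ν u ^ 2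

/-- The oscillator energy `w² + w'²` of `w = riccatiBessel ν`, to which the Sonine energy is
asymptotic as `u → ∞`. -/
noncomputable def oscillatorEnergy (ν u : ℝ) : ℝ :=
  riccatiBessel ν u ^ 2 + riccatiBesselDeriv ν u ^ 2

section Energy

variable {ν u B : ℝ}

lemma sq_sub_quarter_nonneg (hν : 1 / 2 ≤ ν) : 0 ≤ ν ^ 2 - 1 / 4 := by nlinarith

lemma hasDerivAt_sonineEnergy (hν : 0 ≤ ν) (hu : 0 < u) :
    HasDerivAt (sonineEnergy ν) (2 * (ν ^ 2 - 1 / 4) / u ^ 3 * riccatiBessel ν u ^ 2) u := by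
  have hpotential : HasDerivAt (fun u : ℝ => 1 - (ν ^ 2 - 1 / 4) / u ^ 2)
      (2 * (ν ^ 2 - 1 / 4) / u ^ 3) u := by
    refine (((hasDerivAt_const u _).div (hasDerivAt_pow 2 u) (by positivity)).const_sub
      1).congr_deriv ?_
    field_simp
    ring
  refine (((hasDerivAt_riccatiBesselDeriv hν hu).pow 2).add
    (hpotential.mul ((hasDerivAt_riccatiBessel hν hu).pow 2))).congr_deriv ?_
  simp only [Pi.pow_apply]
  ring

theorem monotoneOn_sonineEnergy (hν : 1 / 2 ≤ ν) : MonotoneOn (sonineEnergy ν) (Ioi 0) := by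
  have hν₀ : 0 ≤ ν := by linarith
  have hderiv (v : ℝ) (hv : v ∈ Ioi (0 : ℝ)) := hasDerivAt_sonineEnergy hν₀ hv
  refine monotoneOn_of_hasDerivWithinAt_nonneg (convex_Ioi 0)
    (fun v hv => (hderiv v hv).continuousAt.continuousWithinAt)
    (fun v hv => (hderiv v (interior_subset hv)).hasDerivWithinAt) fun v hv => ?_
  have hv₀ : 0 < v := interior_subset hv
  have hμ := sq_sub_quarter_nonneg hν
  positivity

lemma sonineEnergy_le_oscillatorEnergy (hν : 1 / 2 ≤ ν) (u : ℝ) :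
    sonineEnergy ν u ≤ oscillatorEnergy ν u := by
  have hμ := sq_sub_quarter_nonneg hν
  have hgap : 0 ≤ (ν ^ 2 - 1 / 4) / u ^ 2 * riccatiBessel ν u ^ 2 := by positivity
  rw [sonineEnergy, oscillatorEnergy]
  linarith

lemma mul_oscillatorEnergy_le_sonineEnergy (hν : 1 / 2 ≤ ν) (u : ℝ) :
    (1 - (ν ^ 2 - 1 / 4) / u ^ 2) * oscillatorEnergy ν u ≤ sonineEnergy ν u := by
  have hμ := sq_sub_quarter_nonneg hν
  have hgap : 0 ≤ (ν ^ 2 - 1 / 4) / u ^ 2 * riccatiBesselDeriv ν u ^ 2 := by positivity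
  rw [sonineEnergy, oscillatorEnergy]
  linarith

lemma hasDerivAt_oscillatorEnergy_mul_exp (hν : 0 ≤ ν) (hu : 0 < u) :
    HasDerivAt (fun u => oscillatorEnergy ν u * exp ((ν ^ 2 - 1 / 4) / u))
      (-((ν ^ 2 - 1 / 4) / u ^ 2 * (riccatiBessel ν u - riccatiBesselDeriv ν u) ^ 2 *
        exp ((ν ^ 2 - 1 / 4) / u))) u := by
  have hexponent : HasDerivAt (fun u : ℝ => (ν ^ 2 - 1 / 4) / u) (-(ν ^ 2 - 1 / 4) / u ^ 2) u := by
    refine ((hasDerivAt_inv hu.ne').const_mul (ν ^ 2 - 1 / 4)).congr_deriv ?_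
    ring
  refine ((((hasDerivAt_riccatiBessel hν hu).pow 2).add
    ((hasDerivAt_riccatiBesselDeriv hν hu).pow 2)).mul hexponent.exp).congr_deriv ?_
  simp only [Pi.add_apply, Pi.pow_apply]
  ring

lemma antitoneOn_oscillatorEnergy_mul_exp (hν : 1 / 2 ≤ ν) :
    AntitoneOn (fun u => oscillatorEnergy ν u * exp ((ν ^ 2 - 1 / 4) / u)) (Ioi 0) := by
  have hν₀ : 0 ≤ ν := by linarith
  have hderiv (v : ℝ) (hv : v ∈ Ioi (0 : ℝ)) := hasDerivAt_oscillatorEnergy_mul_exp hν₀ hv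
  refine antitoneOn_of_hasDerivWithinAt_nonpos (convex_Ioi 0)
    (fun v hv => (hderiv v hv).continuousAt.continuousWithinAt)
    (fun v hv => (hderiv v (interior_subset hv)).hasDerivWithinAt) fun v _ => ?_
  have hμ := sq_sub_quarter_nonneg hν
  exact neg_nonpos.2 (by positivity)

lemma sonineEnergy_le_oscillatorEnergy_one (hν : 1 / 2 ≤ ν) (hu : 0 < u) :
    sonineEnergy ν u ≤ oscillatorEnergy ν 1 * exp (ν ^ 2 - 1 / 4) := by
  have hμ := sq_sub_quarter_nonneg hν
  set v := max u 1
  have hv : 0 < v := hu.trans_le (le_max_left u 1)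
  have hE : 0 ≤ oscillatorEnergy ν v := by rw [oscillatorEnergy]; positivity
  calc sonineEnergy ν u ≤ sonineEnergy ν v := monotoneOn_sonineEnergy hν hu hv (le_max_left u 1)
    _ ≤ oscillatorEnergy ν v := sonineEnergy_le_oscillatorEnergy hν v
    _ ≤ oscillatorEnergy ν v * exp ((ν ^ 2 - 1 / 4) / v) :=
        le_mul_of_one_le_right hE (one_le_exp (by positivity))
    _ ≤ oscillatorEnergy ν 1 * exp ((ν ^ 2 - 1 / 4) / 1) :=
        antitoneOn_oscillatorEnergy_mul_exp hν (mem_Ioi.2 one_pos) hv (le_max_right u 1)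
    _ = oscillatorEnergy ν 1 * exp (ν ^ 2 - 1 / 4) := by rw [div_one]

lemma oscillatorEnergy_add_one_le (hν : 0 ≤ ν) (hu : 0 < u) :
    oscillatorEnergy (ν + 1) u ≤
      (1 + ((ν + 1 / 2) / u) ^ 2 + ((ν + 1 / 2) / u) ^ 3 + ((ν + 1 / 2) / u) ^ 4) *
        oscillatorEnergy ν u := by
  have hq : 0 ≤ (ν + 1 / 2) / u := by positivity
  simp only [oscillatorEnergy]
  rw [riccatiBesselDeriv_add_one hν hu, riccatiBessel_add_one]
  generalize (ν + 1 / 2) / u = q at hq ⊢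
  generalize riccatiBessel ν u = w
  generalize riccatiBesselDeriv ν u = d
  have hslack : 0 ≤ 2 * q ^ 2 * w ^ 2 + q ^ 4 * d ^ 2 + q ^ 3 * (w + d) ^ 2 := by positivity
  linear_combination hslack

lemma sonineEnergy_add_one_le (hν : 1 / 2 ≤ ν) (hB : ∀ u > 0, sonineEnergy ν u ≤ B)
    (hu : 0 < u) : sonineEnergy (ν + 1) u ≤ B := by
  set q : ℝ → ℝ := fun v => (ν + 1 / 2) / v
  set r : ℝ → ℝ := fun v => 1 - (ν ^ 2 - 1 / 4) / v ^ 2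
  have hq : Tendsto q atTop (𝓝 0) := tendsto_const_nhds.div_atTop tendsto_id
  have hr : Tendsto r atTop (𝓝 1) := by
    simpa only [sub_zero] using
      (tendsto_const_nhds.div_atTop (tendsto_pow_atTop two_ne_zero)).const_sub (1 : ℝ)
  have hbound : ∀ᶠ v in atTop,
      r v * sonineEnergy (ν + 1) u ≤ (1 + q v ^ 2 + q v ^ 3 + q v ^ 4) * B := by
    filter_upwards [eventually_ge_atTop u, hr.eventually (lt_mem_nhds one_pos)] with v huv hrv
    have hv : 0 < v := hu.trans_le huv
    have hν₁ : 1 / 2 ≤ ν + 1 := by linarith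
    calc r v * sonineEnergy (ν + 1) u ≤ r v * sonineEnergy (ν + 1) v := by
          gcongr
          exact monotoneOn_sonineEnergy hν₁ hu hv huv
      _ ≤ r v * ((1 + q v ^ 2 + q v ^ 3 + q v ^ 4) * oscillatorEnergy ν v) := by
          gcongr
          exact (sonineEnergy_le_oscillatorEnergy hν₁ v).trans
            (oscillatorEnergy_add_one_le (by linarith) hv)
      _ = (1 + q v ^ 2 + q v ^ 3 + q v ^ 4) * (r v * oscillatorEnergy ν v) := by ring
      _ ≤ (1 + q v ^ 2 + q v ^ 3 + q v ^ 4) * B := by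
          gcongr
          exact (mul_oscillatorEnergy_le_sonineEnergy hν v).trans (hB v hv)
  refine le_of_tendsto_of_tendsto (b := atTop) ?_ ?_ hbound
  · simpa only [one_mul] using hr.mul_const (sonineEnergy (ν + 1) u)
  · have hfactor : Tendsto (fun v => (1 + q v ^ 2 + q v ^ 3 + q v ^ 4) * B) atTop
        (𝓝 ((1 + 0 ^ 2 + 0 ^ 3 + 0 ^ 4) * B)) :=
      ((((hq.pow 2).const_add 1).add (hq.pow 3)).add (hq.pow 4)).mul_const B
    simpa using hfactor

lemma sonineEnergy_add_natCast_le (hν : 1 / 2 ≤ ν) (hB : ∀ u > 0, sonineEnergy ν u ≤ B)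
    (m : ℕ) : ∀ u > 0, sonineEnergy (ν + m) u ≤ B := by
  induction m with
  | zero => simpa using hB
  | succ m ih =>
    have hνm : 1 / 2 ≤ ν + m := by linarith [m.cast_nonneg (α := ℝ)]
    intro u hu
    rw [Nat.cast_succ, ← add_assoc]
    exact sonineEnergy_add_one_le hνm ih hu

lemma exists_oscillatorEnergy_one_le (b : ℝ) :
    ∃ E, ∀ ν ∈ Icc 0 b, oscillatorEnergy ν 1 ≤ E := by
  obtain ⟨M, hM⟩ := exists_forall_abs_realBesselJ_le one_pos (b + 1)
  refine ⟨M ^ 2 + ((b + 1 / 2) * M + M) ^ 2, fun ν ⟨hν, hνb⟩ => ?_⟩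
  have hb : 0 ≤ b := hν.trans hνb
  have hJ : |realBesselJ ν 1| ≤ M := hM ν ⟨hν, by linarith⟩
  have hJ' : |realBesselJ (ν + 1) 1| ≤ M := hM (ν + 1) ⟨by linarith, by linarith⟩
  have hderiv : |(ν + 1 / 2) * realBesselJ ν 1 - realBesselJ (ν + 1) 1| ≤ (b + 1 / 2) * M + M := by
    refine (abs_sub _ _).trans (add_le_add ?_ hJ')
    rw [abs_mul, abs_of_nonneg (by positivity)]
    gcongr
  simp only [oscillatorEnergy, riccatiBesselDeriv, riccatiBessel, sqrt_one, one_mul, div_one]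
  exact add_le_add (sq_le_sq' (abs_le.1 hJ).1 (abs_le.1 hJ).2)
    (sq_le_sq' (abs_le.1 hderiv).1 (abs_le.1 hderiv).2)

theorem exists_sonineEnergy_le : ∃ B, ∀ ν ≥ 1 / 2, ∀ u > 0, sonineEnergy ν u ≤ B := by
  obtain ⟨E, hE⟩ := exists_oscillatorEnergy_one_le (3 / 2)
  have hbase (ν : ℝ) (hν : ν ∈ Icc (1 / 2) (3 / 2)) :
      ∀ u > 0, sonineEnergy ν u ≤ E * exp 2 := by
    intro u hu
    have hν₀ : 0 ≤ ν := by linarith [hν.1]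
    have hE₀ : 0 ≤ oscillatorEnergy ν 1 := by rw [oscillatorEnergy]; positivity
    have hEν := hE ν ⟨hν₀, hν.2⟩
    refine (sonineEnergy_le_oscillatorEnergy_one hν.1 hu).trans ?_
    gcongr
    · exact hE₀.trans hEν
    · nlinarith [hν.1, hν.2]
  refine ⟨E * exp 2, fun ν hν => ?_⟩
  set m := ⌊ν - 1 / 2⌋₊
  have hm : (m : ℝ) ≤ ν - 1 / 2 := Nat.floor_le (by linarith)
  have hm' : ν - 1 / 2 < m + 1 := Nat.lt_floor_add_one _
  have hshift := sonineEnergy_add_natCast_le (by linarith)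
    (hbase (ν - m) ⟨by linarith, by linarith⟩) m
  rwa [sub_add_cancel] at hshift

end Energy

/-! ### The derivative of the Riccati–Bessel function -/

section DerivBound

variable {ν u B : ℝ}

lemma tendsto_riccatiBessel_mul_deriv_zero (hν : 0 < ν) :
    Tendsto (fun u => riccatiBessel ν u * riccatiBesselDeriv ν u) (𝓝[>] 0) (𝓝 0) := by
  have hJ := tendsto_realBesselJ_zero hν
  have hJ' := tendsto_realBesselJ_zero (add_pos hν one_pos)
  have hid : Tendsto (fun u : ℝ => u) (𝓝[>] 0) (𝓝 0) := nhdsWithin_le_nhds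
  have hlim := ((hJ.pow 2).const_mul (ν + 1 / 2)).sub (hid.mul (hJ.mul hJ'))
  simp only [ne_eq, OfNat.ofNat_ne_zero, not_false_eq_true, zero_pow, mul_zero, sub_zero] at hlim
  refine hlim.congr' ?_
  filter_upwards [self_mem_nhdsWithin] with u (hu : 0 < u)
  simp only [riccatiBesselDeriv, riccatiBessel]
  have hsq : √u ^ 2 = u := sq_sqrt hu.le
  field_simp
  rw [hsq]
  ring

lemma riccatiBessel_mul_deriv_nonneg (hν : 0 < ν) (hu : 0 < u) (huν : u ^ 2 ≤ ν ^ 2 - 1 / 4) :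
    0 ≤ riccatiBessel ν u * riccatiBesselDeriv ν u := by
  have hderiv (v : ℝ) (hv : v ∈ Ioc 0 u) :=
    (hasDerivAt_riccatiBessel hν.le hv.1).mul (hasDerivAt_riccatiBesselDeriv hν.le hv.1)
  have hmono : MonotoneOn (riccatiBessel ν * riccatiBesselDeriv ν) (Ioc 0 u) := by
    refine monotoneOn_of_hasDerivWithinAt_nonneg (convex_Ioc 0 u)
      (fun v hv => (hderiv v hv).continuousAt.continuousWithinAt)
      (fun v hv => (hderiv v (interior_subset hv)).hasDerivWithinAt) fun v hv => ?_
    have hv : v ∈ Ioc 0 u := interior_subset hv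
    have hpotential : 0 ≤ (ν ^ 2 - 1 / 4) / v ^ 2 - 1 := by
      rw [sub_nonneg, one_le_div (pow_pos hv.1 2)]
      exact (pow_le_pow_left₀ hv.1.le hv.2 2).trans huν
    nlinarith [mul_nonneg hpotential (sq_nonneg (riccatiBessel ν v)),
      sq_nonneg (riccatiBesselDeriv ν v)]
  refine le_of_tendsto (tendsto_riccatiBessel_mul_deriv_zero hν) ?_
  filter_upwards [Ioo_mem_nhdsGT hu] with v hv
  exact hmono ⟨hv.1, hv.2.le⟩ ⟨hu, le_rfl⟩ hv.2.le

lemma monotoneOn_riccatiBesselDeriv_sq (hν : 0 < ν) :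
    MonotoneOn (fun u => riccatiBesselDeriv ν u ^ 2) (Ioc 0 √(ν ^ 2 - 1 / 4)) := by
  have hderiv (v : ℝ) (hv : v ∈ Ioc 0 √(ν ^ 2 - 1 / 4)) :=
    (hasDerivAt_riccatiBesselDeriv hν.le hv.1).pow 2
  refine monotoneOn_of_hasDerivWithinAt_nonneg (convex_Ioc _ _)
    (fun v hv => (hderiv v hv).continuousAt.continuousWithinAt)
    (fun v hv => (hderiv v (interior_subset hv)).hasDerivWithinAt) fun v hv => ?_
  have hv : v ∈ Ioc 0 √(ν ^ 2 - 1 / 4) := interior_subset hv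
  have hvν : v ^ 2 ≤ ν ^ 2 - 1 / 4 := (le_sqrt' hv.1).1 hv.2
  have hpotential : 0 ≤ (ν ^ 2 - 1 / 4) / v ^ 2 - 1 := by
    rwa [sub_nonneg, one_le_div (pow_pos hv.1 2)]
  have := mul_nonneg hpotential (riccatiBessel_mul_deriv_nonneg hν hv.1 hvν)
  simp only [Nat.cast_ofNat, Nat.add_one_sub_one, pow_one]
  linarith

lemma riccatiBesselDeriv_sq_le_sonineEnergy (hu : 0 < u) (huν : ν ^ 2 - 1 / 4 ≤ u ^ 2) :
    riccatiBesselDeriv ν u ^ 2 ≤ sonineEnergy ν u := by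
  have hpotential : 0 ≤ 1 - (ν ^ 2 - 1 / 4) / u ^ 2 := by
    rwa [sub_nonneg, div_le_one (by positivity)]
  exact le_add_of_nonneg_right (by positivity)

lemma riccatiBesselDeriv_sq_le (hν : 0 < ν) (hB : ∀ u > 0, sonineEnergy ν u ≤ B) (hu : 0 < u) :
    riccatiBesselDeriv ν u ^ 2 ≤ B := by
  rcases le_total (ν ^ 2 - 1 / 4) (u ^ 2) with h | h
  · exact (riccatiBesselDeriv_sq_le_sonineEnergy hu h).trans (hB u hu)
  · set s := √(ν ^ 2 - 1 / 4)
    have hus : u ≤ s := (le_sqrt' hu).2 h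
    have hs : 0 < s := hu.trans_le hus
    have hsν : ν ^ 2 - 1 / 4 ≤ s ^ 2 := (sq_sqrt ((sq_nonneg u).trans h)).ge
    calc riccatiBesselDeriv ν u ^ 2 ≤ riccatiBesselDeriv ν s ^ 2 :=
          monotoneOn_riccatiBesselDeriv_sq hν ⟨hu, hus⟩ ⟨hs, le_rfl⟩ hus
      _ ≤ sonineEnergy ν s := riccatiBesselDeriv_sq_le_sonineEnergy hs hsν
      _ ≤ B := hB s hs

theorem exists_abs_riccatiBesselDeriv_le :
    ∃ D, ∀ ν ≥ 1 / 2, ∀ u > 0, |riccatiBesselDeriv ν u| ≤ D := by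
  obtain ⟨B, hB⟩ := exists_sonineEnergy_le
  exact ⟨√B, fun ν hν u hu =>
    abs_le_sqrt (riccatiBesselDeriv_sq_le (by linarith) (hB ν hν) hu)⟩

end DerivBound

section Main

variable {a n x ν : ℝ}

lemma rpow_neg_half_mul_realBesselJ_div (ν : ℝ) (ha : 0 < a) (hx : 0 < x) :
    x ^ (-(1 : ℝ) / 2) * realBesselJ ν (a / x) = (√a)⁻¹ * riccatiBessel ν (a / x) := by
  have : 0 < √a := sqrt_pos.2 ha
  rw [riccatiBessel, neg_div, rpow_neg hx.le, ← sqrt_eq_rpow, sqrt_div ha.le]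
  field_simp

lemma norm_deriv_rpow_neg_half_mul_besselJ_div (hν : 0 ≤ ν) (ha : 0 < a) (hx : 0 < x) :
    ‖deriv (fun y : ℝ => Complex.ofReal (y ^ (-(1 : ℝ) / 2)) * besselJ ν (a / y)) x‖ =
      √a / x ^ 2 * |riccatiBesselDeriv ν (a / x)| := by
  have hreal : (fun y : ℝ => Complex.ofReal (y ^ (-(1 : ℝ) / 2)) * besselJ ν (a / y)) =ᶠ[𝓝 x]
      fun y => (((√a)⁻¹ * riccatiBessel ν (a / y) : ℝ) : ℂ) := by
    filter_upwards [lt_mem_nhds hx] with y hy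
    rw [besselJ_ofReal ν (div_pos ha hy), ← Complex.ofReal_mul,
      rpow_neg_half_mul_realBesselJ_div ν ha hy]
  have hquot : HasDerivAt (fun y : ℝ => a / y) (-(a / x ^ 2)) x := by
    refine ((hasDerivAt_inv hx.ne').const_mul a).congr_deriv ?_
    ring
  have hderiv := (((hasDerivAt_riccatiBessel hν (div_pos ha hx)).comp x hquot).const_mul
    (√a)⁻¹).ofReal_comp
  have hsqrt : (√a)⁻¹ * a = √a := by rw [← div_eq_inv_mul, div_sqrt]
  rw [hreal.deriv_eq]
  refine (congrArg norm hderiv.deriv).trans ?_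
  rw [Complex.norm_real, norm_eq_abs, abs_mul, abs_mul, abs_neg, abs_of_nonneg (by positivity),
    abs_of_nonneg (by positivity : 0 ≤ a / x ^ 2), mul_left_comm, ← mul_div_assoc, hsqrt, mul_comm]

lemma sqrt_div_sq_le_rpow_add_rpow (hn : 0 < n) (hx : 0 < x) :
    √n / x ^ 2 ≤
      n ^ (-(1 : ℝ) / 3) * x ^ (-(7 : ℝ) / 6) + n ^ ((2 : ℝ) / 3) * x ^ (-(13 : ℝ) / 6) := by
  set p := n ^ (-(1 : ℝ) / 3) * x ^ (-(7 : ℝ) / 6) with hp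
  set q := n ^ ((2 : ℝ) / 3) * x ^ (-(13 : ℝ) / 6) with hq
  have hp₀ : 0 ≤ p := by positivity
  have hq₀ : 0 ≤ q := by positivity
  have hmean : √n / x ^ 2 = p ^ ((1 : ℝ) / 6) * q ^ ((5 : ℝ) / 6) := by
    have hn_exp : n ^ (-(1 : ℝ) / 3 * (1 / 6)) * n ^ ((2 : ℝ) / 3 * (5 / 6)) = √n := by
      rw [← rpow_add hn, sqrt_eq_rpow]
      norm_num
    have hx_exp : x ^ (-(7 : ℝ) / 6 * (1 / 6)) * x ^ (-(13 : ℝ) / 6 * (5 / 6)) = (x ^ 2)⁻¹ := by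
      rw [← rpow_add hx, ← rpow_natCast, ← rpow_neg hx.le]
      norm_num
    rw [hp, hq, mul_rpow (by positivity) (by positivity), mul_rpow (by positivity) (by positivity),
      ← rpow_mul hn.le, ← rpow_mul hn.le, ← rpow_mul hx.le, ← rpow_mul hx.le, mul_mul_mul_comm,
      hn_exp, hx_exp, div_eq_mul_inv]
  calc √n / x ^ 2 = p ^ ((1 : ℝ) / 6) * q ^ ((5 : ℝ) / 6) := hmean
    _ ≤ 1 / 6 * p + 5 / 6 * q :=
        geom_mean_le_arith_mean2_weighted (by norm_num) (by norm_num) hp₀ hq₀ (by norm_num)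
    _ ≤ p + q := by linarith

theorem stmt10_general :
    ∃ C : ℝ, ∀ K n x : ℝ, 3 / 2 ≤ K → 0 < n → 0 < x →
      ‖deriv (fun y : ℝ =>
          Complex.ofReal (y ^ (-(1 : ℝ) / 2)) * besselJ ((K : ℂ) - 1) (4 * π * n / y)) x‖ ≤
        C * (n ^ (-(1 : ℝ) / 3) * x ^ (-(7 : ℝ) / 6) +
          n ^ ((2 : ℝ) / 3) * x ^ (-(13 : ℝ) / 6)) := by
  obtain ⟨D, hD⟩ := exists_abs_riccatiBesselDeriv_le
  refine ⟨√(4 * π) * D, fun K n x hK hn hx => ?_⟩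
  have hν : 1 / 2 ≤ K - 1 := by linarith
  have ha : 0 < 4 * π * n := by positivity
  have hw := hD (K - 1) hν (4 * π * n / x) (div_pos ha hx)
  have hD₀ : 0 ≤ D := (abs_nonneg _).trans hw
  rw [← Complex.ofReal_one, ← Complex.ofReal_sub,
    norm_deriv_rpow_neg_half_mul_besselJ_div (by linarith) ha hx]
  calc √(4 * π * n) / x ^ 2 * |riccatiBesselDeriv (K - 1) (4 * π * n / x)|
      ≤ √(4 * π * n) / x ^ 2 * D := by gcongr
    _ = √(4 * π) * D * (√n / x ^ 2) := by rw [sqrt_mul (by positivity)]; ring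
    _ ≤ _ := by
        gcongr
        exact sqrt_div_sq_le_rpow_add_rpow hn hx

end Main

theorem stmt10 :
    ∃ C : ℝ, ∀ K n x : ℝ, (∃ j : ℤ, K = (j : ℝ) + 1 / 2) → 5 / 2 ≤ K →
      1 ≤ n → 0 < x →
      ‖deriv (fun y : ℝ =>
          Complex.ofReal (y ^ (-(1 : ℝ) / 2)) * besselJ ((K : ℂ) - 1) (4 * π * n / y)) x‖ ≤
        C * (n ^ (-(1 : ℝ) / 3) * x ^ (-(7 : ℝ) / 6) + n ^ ((2 : ℝ) / 3) * x ^ (-(13 : ℝ) / 6)) := by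
  obtain ⟨C, hC⟩ := stmt10_general
  exact ⟨C, fun K n x _ hK hn hx => hC K n x (by linarith) (by linarith) hx⟩
end

section
/- There exists an absolute constant C such that for every half-integer K ≥ 5/2 (K ∈ ℤ + 1/2), every real n ≥ 1, and every x ≥ n, the derivative with respect to x of the function x ↦ x^{−1/2} · J_{K−1}(4πn/x) satisfies | d/dx ( x^{−1/2} J_{K−1}(4πn/x) ) | ≤ C·n·x^{−5/2}. -/
open Real MeasureTheory

/-!
Up to the factor `(u/2)^ν`, the Bessel function `J_ν(u)` is the entire function `₀F₁(ν + 1; ·)`,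
regularized by `1/Γ(ν + 1)`, evaluated at `-(u/2)²`. Termwise differentiation gives
`J_ν' = (ν/u) J_ν - J_{ν+1}`, and `Γ(j + 1 + ν) ≥ Γ(ν + 1)` gives
`|J_ν(u)| ≤ (u/2)^ν e^{u²/4} / Γ(ν + 1)`. Since `(u/2)^ν / Γ(ν + 1) ≤ e^{u/2}` uniformly in `ν ≥ 0`,
both `(ν/u) J_ν(u)` and `J_{ν+1}(u)` are bounded uniformly in `ν ≥ 1` and in bounded `u`, and the
chain rule at `u = c/x` contributes the factor `c x⁻²`.
-/

theorem hasDerivAt_formalMultilinearSeries_sum {𝕜 F : Type*} [NontriviallyNormedField 𝕜]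
    [NormedAddCommGroup F] [NormedSpace 𝕜 F] [CompleteSpace F]
    (p : FormalMultilinearSeries 𝕜 𝕜 F) {x : 𝕜} (hx : ‖x‖ₑ < p.radius) :
    HasDerivAt p.sum (∑' n : ℕ, x ^ n • (n + 1) • p.coeff (n + 1)) x := by
  have hsum : HasSum (fun n ↦ p.derivSeries n fun _ ↦ x) (p.derivSeries.sum x) :=
    p.derivSeries.hasSum (by simpa using hx.trans_le p.radius_le_radius_derivSeries)
  have happly : p.derivSeries.sum x 1 = ∑' n : ℕ, x ^ n • (n + 1) • p.coeff (n + 1) := by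
    refine (hsum.mapL (ContinuousLinearMap.apply 𝕜 F (1 : 𝕜))).tsum_eq.symm.trans
      (tsum_congr fun n ↦ ?_)
    simp only [FormalMultilinearSeries.apply_eq_pow_smul_coeff, ← p.derivSeries_coeff_one,
      map_smul, ContinuousLinearMap.apply_apply]
  exact happly ▸ (FormalMultilinearSeries.hasFDerivAt_sum hx).hasDerivAt

theorem Gamma_le_Gamma_add_natCast {s : ℝ} (hs : 1 ≤ s) (n : ℕ) :
    Gamma s ≤ Gamma (s + n) := by
  induction n with
  | zero => simp
  | succ n ih =>
    have hsn : 1 ≤ s + n := le_add_of_le_of_nonneg hs n.cast_nonneg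
    calc Gamma s ≤ Gamma (s + n) := ih
      _ ≤ (s + n) * Gamma (s + n) :=
        le_mul_of_one_le_left (Gamma_nonneg_of_nonneg (by positivity)) hsn
      _ = Gamma (s + (n + 1 : ℕ)) := by
        rw [← Gamma_add_one (by positivity), Nat.cast_succ, add_assoc]

theorem rpow_mul_exp_neg_le_Gamma {a s : ℝ} (ha : 0 ≤ a) (hs : 1 ≤ s) :
    a ^ (s - 1) * exp (-a) ≤ Gamma s := by
  have hs0 : 0 < s := by positivity
  have hint : IntegrableOn (fun x ↦ exp (-x) * x ^ (s - 1)) (Set.Ioi 0) :=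
    GammaIntegral_convergent hs0
  have hsub : Set.Ioi a ⊆ Set.Ioi 0 := Set.Ioi_subset_Ioi ha
  calc a ^ (s - 1) * exp (-a) = ∫ x in Set.Ioi a, exp (-x) * a ^ (s - 1) := by
        rw [integral_mul_const, integral_exp_neg_Ioi, mul_comm]
    _ ≤ ∫ x in Set.Ioi a, exp (-x) * x ^ (s - 1) := by
        refine setIntegral_mono_on ((integrableOn_exp_neg_Ioi a).mul_const _)
          (hint.mono_set hsub) measurableSet_Ioi fun x hx ↦ ?_
        have hax : a ≤ x := le_of_lt hx
        gcongr
    _ ≤ ∫ x in Set.Ioi 0, exp (-x) * x ^ (s - 1) :=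
        setIntegral_mono_set hint (ae_restrict_of_forall_mem measurableSet_Ioi fun x hx ↦
          mul_nonneg (exp_nonneg _) (rpow_nonneg (le_of_lt hx) _)) hsub.eventuallyLE
    _ = Gamma s := (Gamma_eq_integral hs0).symm

theorem rpow_div_Gamma_add_one_le_exp {a ν : ℝ} (ha : 0 ≤ a) (hν : 0 ≤ ν) :
    a ^ ν / Gamma (ν + 1) ≤ exp a := by
  have hΓ : 0 < Gamma (ν + 1) := Gamma_pos_of_pos (by positivity)
  have hle := rpow_mul_exp_neg_le_Gamma ha (le_add_of_nonneg_left hν)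
  rwa [add_sub_cancel_right, exp_neg, ← div_eq_mul_inv, div_le_comm₀ (exp_pos a) hΓ] at hle

section Hypergeometric

open Complex

theorem regularizedHGFun_eq_tsum (a b : Multiset ℂ) (z : ℂ) :
    regularizedHGFun a b z = ∑' n : ℕ, z ^ n * regularizedHGFunCoeff a b n := by
  simp [regularizedHGFun, FormalMultilinearSeries.sum]

theorem succ_mul_regularizedHGFunCoeff_succ (a b : Multiset ℂ) (n : ℕ) :
    (n + 1) * regularizedHGFunCoeff a b (n + 1) =
      a.prod * regularizedHGFunCoeff (a.map (· + 1)) (b.map (· + 1)) n := by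
  have hpoch : (a.map (ascPochhammer ℂ (n + 1)).eval).prod =
      a.prod * ((a.map (· + 1)).map (ascPochhammer ℂ n).eval).prod := by
    simp [ascPochhammer_succ_left, Multiset.prod_map_mul]
  have hGamma : (b.map (Complex.Gamma <| · + (n + 1 : ℂ))).prod =
      ((b.map (· + 1)).map (Complex.Gamma <| · + (n : ℂ))).prod := by
    simp [add_assoc, add_comm (1 : ℂ)]
  have hn : (n + 1 : ℂ) ≠ 0 := Nat.cast_add_one_ne_zero n
  simp only [regularizedHGFunCoeff, hpoch, hGamma, Nat.factorial_succ,
    Nat.cast_mul, Nat.cast_succ]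
  field_simp

theorem hasDerivAt_regularizedHGFun {a b : Multiset ℂ} {z : ℂ}
    (hz : ‖z‖ₑ < (regularizedHGFunSeries a b).radius) :
    HasDerivAt (regularizedHGFun a b)
      (a.prod * regularizedHGFun (a.map (· + 1)) (b.map (· + 1)) z) z := by
  refine (hasDerivAt_formalMultilinearSeries_sum _ hz).congr_deriv ?_
  rw [regularizedHGFun_eq_tsum, ← tsum_mul_left]
  refine tsum_congr fun n ↦ ?_
  have hcoeff := succ_mul_regularizedHGFunCoeff_succ a b n
  simp only [regularizedHGFunSeries_coeff, smul_eq_mul, nsmul_eq_mul, Nat.cast_succ, hcoeff]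
  ring

theorem hasDerivAt_regularizedHGFun_zero_singleton (c z : ℂ) :
    HasDerivAt (regularizedHGFun 0 {c}) (regularizedHGFun 0 {c + 1} z) z := by
  have hz : ‖z‖ₑ < (regularizedHGFunSeries 0 {c}).radius := by
    rw [radius_regularizedHGFunSeries_eq_top (by simp)]
    exact enorm_lt_top
  simpa using hasDerivAt_regularizedHGFun hz

theorem regularizedHGFunCoeff_zero_singleton (c : ℂ) (n : ℕ) :
    regularizedHGFunCoeff 0 {c} n = 1 / (n.factorial * Complex.Gamma (c + n)) := by
  simp [regularizedHGFunCoeff]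

theorem norm_regularizedHGFun_zero_singleton_le {c : ℝ} (hc : 1 ≤ c) (z : ℂ) :
    ‖regularizedHGFun 0 {(c : ℂ)} z‖ ≤ Real.exp ‖z‖ / Real.Gamma c := by
  have hexp : HasSum (fun n : ℕ ↦ ‖z‖ ^ n / n.factorial) (Real.exp ‖z‖) := by
    rw [Real.exp_eq_exp_ℝ]
    exact NormedSpace.expSeries_div_hasSum_exp ‖z‖
  rw [regularizedHGFun_eq_tsum]
  refine tsum_of_norm_bounded (hexp.div_const _) fun n ↦ ?_
  have hΓ : 0 < Real.Gamma c := Real.Gamma_pos_of_pos (by positivity)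
  have hΓn : Real.Gamma c ≤ Real.Gamma (c + n) := Gamma_le_Gamma_add_natCast hc n
  have hnorm : ‖Complex.Gamma (c + n)‖ = Real.Gamma (c + n) := by
    rw [← ofReal_natCast, ← ofReal_add, Gamma_ofReal, norm_real,
      Real.norm_of_nonneg (hΓ.le.trans hΓn)]
  calc ‖z ^ n * regularizedHGFunCoeff 0 {(c : ℂ)} n‖
      = ‖z‖ ^ n / n.factorial / Real.Gamma (c + n) := by
        rw [regularizedHGFunCoeff_zero_singleton, mul_one_div, norm_div, norm_mul, norm_pow,
          RCLike.norm_natCast, hnorm, div_div]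
    _ ≤ ‖z‖ ^ n / n.factorial / Real.Gamma c := by gcongr

end Hypergeometric

section Bessel

variable {u : ℝ}

theorem cexp_log_half (hu : 0 < u) : Complex.exp (log (u / 2)) = u / 2 := by
  rw [← Complex.ofReal_exp, exp_log (half_pos hu), Complex.ofReal_div, Complex.ofReal_ofNat]

theorem besselJ_eq_exp_mul_regularizedHGFun (ν : ℂ) (hu : 0 < u) :
    besselJ ν u =
      Complex.exp (ν * log (u / 2)) * Complex.regularizedHGFun 0 {ν + 1} (-(u / 2) ^ 2) := by
  rw [besselJ, regularizedHGFun_eq_tsum, ← tsum_mul_left]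
  refine tsum_congr fun j ↦ ?_
  have hpow : Complex.exp ((2 * j + ν) * log (u / 2)) =
      (u / 2 : ℂ) ^ (2 * j) * Complex.exp (ν * log (u / 2)) := by
    rw [add_mul, Complex.exp_add, ← cexp_log_half hu, ← Complex.exp_nat_mul,
      Nat.cast_mul, Nat.cast_two]
  have hΓ : (j : ℂ) + 1 + ν = ν + 1 + j := by ring
  rw [hpow, neg_pow ((u / 2 : ℂ) ^ 2), ← pow_mul, hΓ, regularizedHGFunCoeff_zero_singleton]
  ring

theorem hasDerivAt_besselJ (ν : ℂ) (hu : 0 < u) :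
    HasDerivAt (besselJ ν) (ν / u * besselJ ν u - besselJ (ν + 1) u) u := by
  have hu2 : u / 2 ≠ 0 := by positivity
  have hlog : HasDerivAt (fun v : ℝ ↦ (log (v / 2) : ℂ)) (u⁻¹ : ℝ) u :=
    ((((hasDerivAt_id' u).div_const 2).log hu2).congr_deriv (by field_simp)).ofReal_comp
  have hsq : HasDerivAt (fun v : ℝ ↦ -(v / 2 : ℂ) ^ 2) (-(u / 2)) u :=
    (((hasDerivAt_id' u).ofReal_comp.div_const 2).pow 2).neg.congr_deriv (by push_cast; ring)
  have hprod := (hlog.const_mul ν).cexp.mul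
    ((hasDerivAt_regularizedHGFun_zero_singleton (ν + 1) _).comp u hsq)
  refine (hprod.congr_of_eventuallyEq ?_).congr_deriv ?_
  · filter_upwards [lt_mem_nhds hu] with v hv
    exact besselJ_eq_exp_mul_regularizedHGFun ν hv
  · rw [besselJ_eq_exp_mul_regularizedHGFun _ hu, besselJ_eq_exp_mul_regularizedHGFun _ hu,
      add_mul ν, one_mul, Complex.exp_add, cexp_log_half hu, Function.comp_apply,
      Complex.ofReal_inv]
    ring

theorem norm_besselJ_le {ν : ℝ} (hν : 0 ≤ ν) (hu : 0 < u) :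
    ‖besselJ ν u‖ ≤ (u / 2) ^ ν / Gamma (ν + 1) * exp ((u / 2) ^ 2) := by
  have hu2 : 0 < u / 2 := by positivity
  have hpow : ‖Complex.exp (ν * log (u / 2))‖ = (u / 2) ^ ν := by
    rw [← Complex.ofReal_mul, Complex.norm_exp_ofReal, rpow_def_of_pos hu2, mul_comm]
  have hHG := norm_regularizedHGFun_zero_singleton_le (le_add_of_nonneg_left hν)
    (-(u / 2 : ℂ) ^ 2)
  have harg : ‖-(u / 2 : ℂ) ^ 2‖ = (u / 2) ^ 2 := by
    rw [norm_neg, norm_pow, norm_div, Complex.norm_real, norm_of_nonneg hu.le, RCLike.norm_ofNat]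
  rw [harg, Complex.ofReal_add, Complex.ofReal_one] at hHG
  rw [besselJ_eq_exp_mul_regularizedHGFun _ hu, norm_mul, hpow, div_mul_eq_mul_div, mul_div_assoc]
  gcongr

theorem norm_besselJ_le_exp {ν : ℝ} (hν : 0 ≤ ν) (hu : 0 < u) :
    ‖besselJ ν u‖ ≤ exp (u / 2 + (u / 2) ^ 2) :=
  calc ‖besselJ ν u‖ ≤ (u / 2) ^ ν / Gamma (ν + 1) * exp ((u / 2) ^ 2) := norm_besselJ_le hν hu
    _ ≤ exp (u / 2) * exp ((u / 2) ^ 2) := by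
      gcongr
      exact rpow_div_Gamma_add_one_le_exp (by positivity) hν
    _ = exp (u / 2 + (u / 2) ^ 2) := (exp_add _ _).symm

theorem mul_norm_besselJ_le_exp {ν : ℝ} (hν : 1 ≤ ν) (hu : 0 < u) :
    ν * ‖besselJ ν u‖ ≤ u / 2 * exp (u / 2 + (u / 2) ^ 2) := by
  have hν0 : 0 < ν := by positivity
  have hu2 : 0 < u / 2 := by positivity
  calc ν * ‖besselJ ν u‖ ≤ ν * ((u / 2) ^ ν / Gamma (ν + 1) * exp ((u / 2) ^ 2)) := by
        gcongr
        exact norm_besselJ_le hν0.le hu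
    _ = u / 2 * ((u / 2) ^ (ν - 1) / Gamma (ν - 1 + 1) * exp ((u / 2) ^ 2)) := by
        rw [Gamma_add_one hν0.ne', sub_add_cancel, rpow_sub_one hu2.ne']
        field_simp
    _ ≤ u / 2 * (exp (u / 2) * exp ((u / 2) ^ 2)) := by
        gcongr
        exact rpow_div_Gamma_add_one_le_exp hu2.le (sub_nonneg.mpr hν)
    _ = u / 2 * exp (u / 2 + (u / 2) ^ 2) := by rw [exp_add]

end Bessel

section Dilation

variable {c x : ℝ}

theorem hasDerivAt_rpow_mul_besselJ_div (a : ℝ) (ν : ℂ) (hc : 0 < c) (hx : 0 < x) :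
    HasDerivAt (fun y : ℝ ↦ ((y ^ a : ℝ) : ℂ) * besselJ ν (c / y))
      ((a - ν) * (x ^ (a - 1) : ℝ) * besselJ ν (c / x) +
        c * (x ^ (a - 2) : ℝ) * besselJ (ν + 1) (c / x)) x := by
  have hrpow : HasDerivAt (fun y : ℝ ↦ ((y ^ a : ℝ) : ℂ)) (a * x ^ (a - 1) : ℝ) x :=
    (hasDerivAt_rpow_const (Or.inl hx.ne')).ofReal_comp
  have hdiv : HasDerivAt (fun y : ℝ ↦ c / y) (-c / x ^ 2) x := by
    simpa using (hasDerivAt_const x c).fun_div (hasDerivAt_id x) hx.ne'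
  have hbessel := (hasDerivAt_besselJ ν (div_pos hc hx)).scomp x hdiv
  refine (hrpow.mul hbessel).congr_deriv ?_
  have hx' : (x : ℂ) ≠ 0 := Complex.ofReal_ne_zero.mpr hx.ne'
  have hc' : (c : ℂ) ≠ 0 := Complex.ofReal_ne_zero.mpr hc.ne'
  rw [rpow_sub_one hx.ne', rpow_sub hx, rpow_two]
  simp only [Complex.real_smul, Function.comp_apply]
  push_cast
  field_simp
  ring

theorem norm_deriv_rpow_mul_besselJ_div_le (a : ℝ) {ν : ℝ} (hν : 1 ≤ ν) (hc : 0 < c)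
    (hx : 0 < x) :
    ‖deriv (fun y : ℝ ↦ ((y ^ a : ℝ) : ℂ) * besselJ ν (c / y)) x‖ ≤
      (|a| + 3) / 2 * exp (c / x / 2 + (c / x / 2) ^ 2) * c * x ^ (a - 2) := by
  have hu : 0 < c / x := div_pos hc hx
  have hν0 : 0 ≤ ν := by positivity
  set M := exp (c / x / 2 + (c / x / 2) ^ 2)
  have hJ : ν * ‖besselJ ν (c / x)‖ ≤ c / x / 2 * M := mul_norm_besselJ_le_exp hν hu
  have hJ_succ : ‖besselJ (ν + 1) (c / x)‖ ≤ M := by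
    exact_mod_cast norm_besselJ_le_exp (by positivity : 0 ≤ ν + 1) hu
  have hcoeff : ‖(a - ν : ℂ)‖ ≤ (|a| + 1) * ν := by
    rw [← Complex.ofReal_sub, Complex.norm_real]
    calc |a - ν| ≤ |a| + ν := (abs_sub a ν).trans_eq (by rw [abs_of_nonneg hν0])
      _ ≤ (|a| + 1) * ν := by nlinarith [abs_nonneg a]
  rw [(hasDerivAt_rpow_mul_besselJ_div a ν hc hx).deriv]
  calc ‖(a - ν : ℂ) * (x ^ (a - 1) : ℝ) * besselJ ν (c / x) +
        c * (x ^ (a - 2) : ℝ) * besselJ (ν + 1) (c / x)‖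
      ≤ ‖(a - ν : ℂ)‖ * x ^ (a - 1) * ‖besselJ ν (c / x)‖ +
        c * x ^ (a - 2) * ‖besselJ (ν + 1) (c / x)‖ := by
        refine (norm_add_le _ _).trans_eq ?_
        simp only [norm_mul, Complex.norm_real, norm_of_nonneg hc.le,
          norm_of_nonneg (rpow_nonneg hx.le _)]
    _ ≤ (|a| + 1) * ν * x ^ (a - 1) * ‖besselJ ν (c / x)‖ + c * x ^ (a - 2) * M := by gcongr
    _ = (|a| + 1) * x ^ (a - 1) * (ν * ‖besselJ ν (c / x)‖) + c * x ^ (a - 2) * M := by ring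
    _ ≤ (|a| + 1) * x ^ (a - 1) * (c / x / 2 * M) + c * x ^ (a - 2) * M := by gcongr
    _ = (|a| + 3) / 2 * M * c * x ^ (a - 2) := by
        rw [rpow_sub_one hx.ne', rpow_sub hx, rpow_two]
        field_simp
        ring

end Dilation

theorem stmt11_general :
    ∃ C : ℝ, ∀ K n x : ℝ, 2 ≤ K → 0 < n → n ≤ x →
      ‖deriv (fun y : ℝ =>
          Complex.ofReal (y ^ (-(1 : ℝ) / 2)) * besselJ ((K : ℂ) - 1) (4 * π * n / y)) x‖ ≤
        C * n * x ^ (-(5 : ℝ) / 2) := by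
  refine ⟨7 * π * exp (2 * π + (2 * π) ^ 2), fun K n x hK hn hnx ↦ ?_⟩
  have hx : 0 < x := hn.trans_le hnx
  have hu : 4 * π * n / x / 2 ≤ 2 * π := by
    rw [div_div, div_le_iff₀ (by positivity)]
    nlinarith [pi_pos]
  have hderiv := norm_deriv_rpow_mul_besselJ_div_le (-1 / 2) (ν := K - 1) (c := 4 * π * n)
    (by linarith) (by positivity) hx
  rw [Complex.ofReal_sub, Complex.ofReal_one] at hderiv
  refine hderiv.trans ?_
  calc (|(-1 / 2 : ℝ)| + 3) / 2 * exp (4 * π * n / x / 2 + (4 * π * n / x / 2) ^ 2) *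
        (4 * π * n) * x ^ (-1 / 2 - 2 : ℝ)
      ≤ (|(-1 / 2 : ℝ)| + 3) / 2 * exp (2 * π + (2 * π) ^ 2) * (4 * π * n) *
        x ^ (-1 / 2 - 2 : ℝ) := by gcongr
    _ = 7 * π * exp (2 * π + (2 * π) ^ 2) * n * x ^ (-(5 : ℝ) / 2) := by
        have habs : |(-1 / 2 : ℝ)| = 1 / 2 := by norm_num [abs_of_neg]
        have hexponent : (-1 / 2 - 2 : ℝ) = -5 / 2 := by norm_num
        rw [habs, hexponent]
        ring

theorem stmt11 :
    ∃ C : ℝ, ∀ K n x : ℝ, (∃ j : ℤ, K = (j : ℝ) + 1 / 2) → 5 / 2 ≤ K →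
      1 ≤ n → n ≤ x →
      ‖deriv (fun y : ℝ =>
          Complex.ofReal (y ^ (-(1 : ℝ) / 2)) * besselJ ((K : ℂ) - 1) (4 * π * n / y)) x‖ ≤
        C * n * x ^ (-(5 : ℝ) / 2) := by
  obtain ⟨C, hC⟩ := stmt11_general
  exact ⟨C, fun K n x _ hK hn hnx ↦ hC K n x (by linarith) (by linarith) hnx⟩
end
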